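/- arXiv:1909.04699 — 9 statements merged into one kernel-verified Lean document; each statement's English description precedes it below -/
import Mathlib

section
/- Let n ≥ 1 be an integer, β ≥ 0 and α ∈ (0,1). There exists a constant c > 0 depending only on n and β such that for every half-space H ⊆ ℝⁿ, all x, y ∈ H, every r ≥ 0 and every t > 0: ∫_{H \ B((1−α)x + αy, r)} k(αt, x, z) · k((1−α)t, z, y) · δ_H(z)^β dz ≤ c · k(t, x, y) · t^{β/2} · exp(−r²/(8α(1−α)t)) · (1 + (δ_H(x) + δ_H(y))/√t)^β. -/
open MeasureTheory Real
open scoped RealInnerProductSpace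

/-- The global Gaussian heat kernel `k(t,x,y) = (4πt)^(−n/2) exp(−|x−y|²/(4t))` on ℝⁿ. -/
noncomputable def heatKernel (n : ℕ) (t : ℝ) (x y : EuclideanSpace ℝ (Fin n)) : ℝ :=
  (4 * π * t) ^ (-(n : ℝ) / 2) * Real.exp (-‖x - y‖ ^ 2 / (4 * t))

/-!
Put `w = (1 - α)x + αy` and `s = α(1 - α)t`. Completing the square gives the Brownian bridge
identity `k(αt,x,z) k((1-α)t,z,y) = k(t,x,y) k(s,z,w)`, so only the Gaussian centred at `w`
depends on `z`. A convex `1`-Lipschitz `δ` which is nonnegative at `x` and `y` satisfies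
`δ(z) ≤ δ(x) + δ(y) + |z - w|`, so `δ(z)^β` is at most `t^(β/2) (1 + (δ(x) + δ(y))/√t)^β` times
`(1 + |z - w|/√s)^β`. Split the exponent of `k(s,z,w)` according to `1/4 = 1/16 + 1/8 + 1/16`:
the first part absorbs the power of `1 + |z - w|/√s`, the second is at least `r²/(8s)` off the
ball, and the third leaves a multiple of `k(4s,z,w)`, whose integral is `1`. The half-space is
the case where `δ` is the signed distance to a hyperplane, which is affine and `1`-Lipschitz.
-/

section InnerProductSpace

variable {E : Type*} [NormedAddCommGroup E] [InnerProductSpace ℝ E]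

lemma norm_sub_sq_div_add_norm_sub_sq_div (x y z : E) {α : ℝ} (hα₀ : α ≠ 0) (hα₁ : 1 - α ≠ 0) :
    ‖x - z‖ ^ 2 / α + ‖z - y‖ ^ 2 / (1 - α) =
      ‖x - y‖ ^ 2 + ‖z - ((1 - α) • x + α • y)‖ ^ 2 / (α * (1 - α)) := by
  have hxy : x - y = (x - z) + (z - y) := by abel
  have hzw : z - ((1 - α) • x + α • y) = α • (z - y) - (1 - α) • (x - z) := by module
  rw [hxy, hzw, norm_add_sq_real, norm_sub_sq_real (α • (z - y)), norm_smul, norm_smul,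
    real_inner_smul_left, real_inner_smul_right, real_inner_comm]
  simp only [Real.norm_eq_abs, mul_pow, sq_abs]
  field_simp
  ring

lemma convexOn_inner_sub (p u : E) : ConvexOn ℝ Set.univ fun z ↦ ⟪z - p, u⟫ := by
  refine ⟨convex_univ, fun x _ y _ a b _ _ hab ↦ le_of_eq ?_⟩
  simp only [inner_sub_left, inner_add_left, real_inner_smul_left, smul_eq_mul]
  linear_combination ⟪p, u⟫ * hab

lemma lipschitzWith_inner_sub (p u : E) : LipschitzWith ‖u‖₊ fun z ↦ ⟪z - p, u⟫ := by
  refine LipschitzWith.of_dist_le_mul fun x y ↦ ?_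
  rw [Real.dist_eq, ← inner_sub_left, sub_sub_sub_cancel_right, dist_eq_norm, mul_comm]
  exact abs_real_inner_le_norm _ _

end InnerProductSpace

lemma le_add_add_norm_sub_of_convexOn_of_lipschitzWith {E : Type*} [NormedAddCommGroup E]
    [NormedSpace ℝ E] {δ : E → ℝ} (hconv : ConvexOn ℝ Set.univ δ) (hlip : LipschitzWith 1 δ)
    {x y : E} (hx : 0 ≤ δ x) (hy : 0 ≤ δ y) {α : ℝ} (hα₀ : 0 ≤ α) (hα₁ : α ≤ 1) (z : E) :
    δ z ≤ δ x + δ y + ‖z - ((1 - α) • x + α • y)‖ := by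
  have hw : δ ((1 - α) • x + α • y) ≤ (1 - α) * δ x + α * δ y :=
    hconv.2 trivial trivial (sub_nonneg.2 hα₁) hα₀ (sub_add_cancel 1 α)
  have hz : δ z ≤ δ ((1 - α) • x + α • y) + ‖z - ((1 - α) • x + α • y)‖ := by
    simpa [dist_eq_norm] using hlip.le_add_mul z ((1 - α) • x + α • y)
  nlinarith [mul_nonneg hα₀ hx, mul_nonneg (sub_nonneg.2 hα₁) hy]

lemma one_add_rpow_le_exp_mul_exp_sq {v β ε : ℝ} (hv : 0 ≤ 1 + v) (hβ : 0 ≤ β) (hε : 0 < ε) :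
    (1 + v) ^ β ≤ exp (β ^ 2 / (4 * ε)) * exp (ε * v ^ 2) := by
  have hyoung : v * β ≤ β ^ 2 / (4 * ε) + ε * v ^ 2 := by
    have hsq : β ^ 2 / (4 * ε) + ε * v ^ 2 - v * β = (β - 2 * ε * v) ^ 2 / (4 * ε) := by
      field_simp
      ring
    have : 0 ≤ (β - 2 * ε * v) ^ 2 / (4 * ε) := by positivity
    linarith
  calc (1 + v) ^ β ≤ exp v ^ β := rpow_le_rpow hv (by linarith [add_one_le_exp v]) hβ
    _ = exp (v * β) := (exp_mul v β).symm
    _ ≤ exp (β ^ 2 / (4 * ε) + ε * v ^ 2) := exp_le_exp.2 hyoung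
    _ = exp (β ^ 2 / (4 * ε)) * exp (ε * v ^ 2) := exp_add _ _

lemma add_rpow_le_rpow_mul_one_add_rpow {a b s t β : ℝ} (ha : 0 ≤ a) (hb : 0 ≤ b) (hs : 0 < s)
    (hst : s ≤ t) (hβ : 0 ≤ β) :
    (a + b) ^ β ≤ t ^ (β / 2) * (1 + a / √t) ^ β * (1 + b / √s) ^ β := by
  have ht : 0 < t := hs.trans_le hst
  have hfactor : a + b ≤ √t * (1 + a / √t) * (1 + b / √s) :=
    calc a + b = √t * (a / √t + b / √t) := by field_simp
      _ ≤ √t * (a / √t + b / √s) := by gcongr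
      _ ≤ √t * ((1 + a / √t) * (1 + b / √s)) := by
        gcongr
        nlinarith [show 0 ≤ a / √t * (b / √s) by positivity]
      _ = √t * (1 + a / √t) * (1 + b / √s) := (mul_assoc _ _ _).symm
  calc (a + b) ^ β ≤ (√t * (1 + a / √t) * (1 + b / √s)) ^ β := by gcongr
    _ = √t ^ β * (1 + a / √t) ^ β * (1 + b / √s) ^ β := by
      rw [mul_rpow (by positivity) (by positivity), mul_rpow (by positivity) (by positivity)]
    _ = t ^ (β / 2) * (1 + a / √t) ^ β * (1 + b / √s) ^ β := by
      rw [rpow_div_two_eq_sqrt β ht.le]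

section HeatKernel

variable {n : ℕ} {s t : ℝ}

lemma heatKernel_nonneg (ht : 0 ≤ t) (x y : EuclideanSpace ℝ (Fin n)) :
    0 ≤ heatKernel n t x y := by
  unfold heatKernel
  positivity

lemma integral_heatKernel (ht : 0 < t) (w : EuclideanSpace ℝ (Fin n)) :
    ∫ z, heatKernel n t z w = 1 := by
  have hgauss : ∫ v : EuclideanSpace ℝ (Fin n), exp (-‖v‖ ^ 2 / (4 * t)) =
      (4 * π * t) ^ ((n : ℝ) / 2) := by
    have := GaussianFourier.integral_rexp_neg_mul_sq_norm (V := EuclideanSpace ℝ (Fin n))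
      (b := 1 / (4 * t)) (by positivity)
    rw [finrank_euclideanSpace_fin] at this
    convert this using 3
    · ring_nf
    · field_simp
  simp only [heatKernel]
  rw [integral_const_mul, integral_sub_right_eq_self (fun v ↦ exp (-‖v‖ ^ 2 / (4 * t))), hgauss,
    ← rpow_add (by positivity), neg_div, neg_add_cancel, rpow_zero]

lemma integrable_heatKernel (ht : 0 < t) (w : EuclideanSpace ℝ (Fin n)) :
    Integrable fun z ↦ heatKernel n t z w :=
  .of_integral_ne_zero (by simp [integral_heatKernel ht])

lemma heatKernel_mul_heatKernel {α : ℝ} (hα : α ∈ Set.Ioo (0 : ℝ) 1) (ht : 0 < t)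
    (x y z : EuclideanSpace ℝ (Fin n)) :
    heatKernel n (α * t) x z * heatKernel n ((1 - α) * t) z y =
      heatKernel n t x y * heatKernel n (α * (1 - α) * t) z ((1 - α) • x + α • y) := by
  have hα₀ : 0 < α := hα.1
  have hα₁ : 0 < 1 - α := sub_pos.2 hα.2
  have hconst : (4 * π * (α * t)) ^ (-(n : ℝ) / 2) * (4 * π * ((1 - α) * t)) ^ (-(n : ℝ) / 2) =
      (4 * π * t) ^ (-(n : ℝ) / 2) * (4 * π * (α * (1 - α) * t)) ^ (-(n : ℝ) / 2) := by
    rw [← mul_rpow (by positivity) (by positivity), ← mul_rpow (by positivity) (by positivity)]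
    ring_nf
  have hexponent : -‖x - z‖ ^ 2 / (4 * (α * t)) + -‖z - y‖ ^ 2 / (4 * ((1 - α) * t)) =
      -‖x - y‖ ^ 2 / (4 * t) +
        -‖z - ((1 - α) • x + α • y)‖ ^ 2 / (4 * (α * (1 - α) * t)) := by
    have hsq := norm_sub_sq_div_add_norm_sub_sq_div x y z hα₀.ne' hα₁.ne'
    field_simp at hsq ⊢
    linear_combination -hsq
  simp only [heatKernel]
  rw [mul_mul_mul_comm, hconst, ← exp_add, hexponent, exp_add, mul_mul_mul_comm]

lemma heatKernel_mul_exp_le (hs : 0 < s) {r : ℝ} (hr : 0 ≤ r) {z w : EuclideanSpace ℝ (Fin n)}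
    (hrz : r ≤ ‖z - w‖) :
    heatKernel n s z w * exp (‖z - w‖ ^ 2 / (16 * s)) ≤
      4 ^ ((n : ℝ) / 2) * exp (-r ^ 2 / (8 * s)) * heatKernel n (4 * s) z w := by
  have hconst : (4 * π * s) ^ (-(n : ℝ) / 2) =
      4 ^ ((n : ℝ) / 2) * (4 * π * (4 * s)) ^ (-(n : ℝ) / 2) := by
    rw [mul_left_comm (4 * π) 4 s, mul_rpow zero_le_four (by positivity), ← mul_assoc,
      ← rpow_add zero_lt_four, neg_div, add_neg_cancel, rpow_zero, one_mul]
  have hexponent : -‖z - w‖ ^ 2 / (4 * s) + ‖z - w‖ ^ 2 / (16 * s) ≤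
      -r ^ 2 / (8 * s) + -‖z - w‖ ^ 2 / (4 * (4 * s)) :=
    calc -‖z - w‖ ^ 2 / (4 * s) + ‖z - w‖ ^ 2 / (16 * s)
        = -‖z - w‖ ^ 2 / (8 * s) + -‖z - w‖ ^ 2 / (4 * (4 * s)) := by
          ring
      _ ≤ -r ^ 2 / (8 * s) + -‖z - w‖ ^ 2 / (4 * (4 * s)) := by gcongr
  calc heatKernel n s z w * exp (‖z - w‖ ^ 2 / (16 * s))
      = (4 * π * s) ^ (-(n : ℝ) / 2) *
          exp (-‖z - w‖ ^ 2 / (4 * s) + ‖z - w‖ ^ 2 / (16 * s)) := by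
        rw [heatKernel, exp_add, mul_assoc]
    _ ≤ (4 * π * s) ^ (-(n : ℝ) / 2) *
          exp (-r ^ 2 / (8 * s) + -‖z - w‖ ^ 2 / (4 * (4 * s))) := by gcongr
    _ = 4 ^ ((n : ℝ) / 2) * exp (-r ^ 2 / (8 * s)) * heatKernel n (4 * s) z w := by
        rw [heatKernel, hconst, exp_add]
        ring

lemma heatKernel_mul_rpow_le {β a d r : ℝ} (hβ : 0 ≤ β) (hs : 0 < s) (hst : s ≤ t) (hr : 0 ≤ r)
    (ha : 0 ≤ a) (hd : 0 ≤ d) {z w : EuclideanSpace ℝ (Fin n)} (hda : d ≤ a + ‖z - w‖)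
    (hrz : r ≤ ‖z - w‖) :
    heatKernel n s z w * d ^ β ≤
      exp (4 * β ^ 2) * 4 ^ ((n : ℝ) / 2) * t ^ (β / 2) * exp (-r ^ 2 / (8 * s)) *
        (1 + a / √t) ^ β * heatKernel n (4 * s) z w := by
  have ht : 0 < t := hs.trans_le hst
  have hk := heatKernel_nonneg hs.le z w
  have hpow : (1 + ‖z - w‖ / √s) ^ β ≤ exp (4 * β ^ 2) * exp (‖z - w‖ ^ 2 / (16 * s)) := by
    have hexp := one_add_rpow_le_exp_mul_exp_sq (v := ‖z - w‖ / √s) (ε := 1 / 16)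
      (by positivity) hβ (by norm_num)
    rw [div_pow, sq_sqrt hs.le] at hexp
    convert hexp using 3 <;> ring
  calc heatKernel n s z w * d ^ β
      ≤ heatKernel n s z w * (a + ‖z - w‖) ^ β := by gcongr
    _ ≤ heatKernel n s z w *
          (t ^ (β / 2) * (1 + a / √t) ^ β * (1 + ‖z - w‖ / √s) ^ β) := by
        gcongr
        exact add_rpow_le_rpow_mul_one_add_rpow ha (norm_nonneg _) hs hst hβ
    _ ≤ heatKernel n s z w * (t ^ (β / 2) * (1 + a / √t) ^ β *
          (exp (4 * β ^ 2) * exp (‖z - w‖ ^ 2 / (16 * s)))) := by gcongr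
    _ = t ^ (β / 2) * (1 + a / √t) ^ β * exp (4 * β ^ 2) *
          (heatKernel n s z w * exp (‖z - w‖ ^ 2 / (16 * s))) := by ring
    _ ≤ t ^ (β / 2) * (1 + a / √t) ^ β * exp (4 * β ^ 2) *
          (4 ^ ((n : ℝ) / 2) * exp (-r ^ 2 / (8 * s)) * heatKernel n (4 * s) z w) := by
        gcongr ?_ * ?_
        exact heatKernel_mul_exp_le hs hr hrz
    _ = _ := by ring

lemma setIntegral_heatKernel_mul_rpow_le {β a r : ℝ} (hβ : 0 ≤ β) (hs : 0 < s) (hst : s ≤ t)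
    (hr : 0 ≤ r) (ha : 0 ≤ a) {w : EuclideanSpace ℝ (Fin n)} {S : Set (EuclideanSpace ℝ (Fin n))}
    {δ : EuclideanSpace ℝ (Fin n) → ℝ} (hδ : ∀ z ∈ S, 0 ≤ δ z)
    (hδa : ∀ z ∈ S, δ z ≤ a + ‖z - w‖) :
    ∫ z in S \ Metric.ball w r, heatKernel n s z w * δ z ^ β ≤
      exp (4 * β ^ 2) * 4 ^ ((n : ℝ) / 2) * t ^ (β / 2) * exp (-r ^ 2 / (8 * s)) *
        (1 + a / √t) ^ β := by
  have ht : 0 < t := hs.trans_le hst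
  have hs4 : 0 < 4 * s := by positivity
  set C := exp (4 * β ^ 2) * 4 ^ ((n : ℝ) / 2) * t ^ (β / 2) * exp (-r ^ 2 / (8 * s)) *
    (1 + a / √t) ^ β
  have hint : Integrable fun z ↦ C * heatKernel n (4 * s) z w :=
    (integrable_heatKernel hs4 w).const_mul C
  have hpointwise : ∀ z ∈ S \ Metric.ball w r,
      heatKernel n s z w * δ z ^ β ≤ C * heatKernel n (4 * s) z w := fun z hz ↦
    heatKernel_mul_rpow_le hβ hs hst hr ha (hδ z hz.1) (hδa z hz.1)
      (by simpa [dist_eq_norm] using hz.2)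
  calc ∫ z in S \ Metric.ball w r, heatKernel n s z w * δ z ^ β
      ≤ ∫ z in S \ Metric.ball w r, C * heatKernel n (4 * s) z w :=
        setIntegral_mono_of_nonneg
          (fun z hz ↦ mul_nonneg (heatKernel_nonneg hs.le z w) (rpow_nonneg (hδ z hz.1) β))
          hpointwise hint.integrableOn
    _ ≤ ∫ z, C * heatKernel n (4 * s) z w :=
        setIntegral_le_integral hint (.of_forall fun z ↦
          mul_nonneg (by positivity) (heatKernel_nonneg hs4.le z w))
    _ = C := by rw [integral_const_mul, integral_heatKernel hs4, mul_one]

end HeatKernel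

theorem stmt0_general (n : ℕ) (β : ℝ) (hβ : 0 ≤ β) :
    ∃ c : ℝ, 0 < c ∧
      ∀ α : ℝ, α ∈ Set.Ioo (0 : ℝ) 1 →
      ∀ δ : EuclideanSpace ℝ (Fin n) → ℝ, ConvexOn ℝ Set.univ δ → LipschitzWith 1 δ →
      ∀ x y : EuclideanSpace ℝ (Fin n), 0 ≤ δ x → 0 ≤ δ y →
      ∀ r t : ℝ, 0 ≤ r → 0 < t →
      (∫ z in {z | 0 < δ z} \ Metric.ball ((1 - α) • x + α • y) r,
        heatKernel n (α * t) x z * heatKernel n ((1 - α) * t) z y * δ z ^ β)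
      ≤ c * heatKernel n t x y * t ^ (β / 2) *
          Real.exp (-r ^ 2 / (8 * α * (1 - α) * t)) *
          (1 + (δ x + δ y) / Real.sqrt t) ^ β := by
  refine ⟨exp (4 * β ^ 2) * 4 ^ ((n : ℝ) / 2), by positivity, ?_⟩
  intro α hα δ hconv hlip x y hx hy r t hr ht
  have hα₁ : 0 < 1 - α := sub_pos.2 hα.2
  have hs : 0 < α * (1 - α) * t := mul_pos (mul_pos hα.1 hα₁) ht
  have hst : α * (1 - α) * t ≤ t := mul_le_of_le_one_left ht.le (by nlinarith [sq_nonneg α, hα.2])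
  have hbound := setIntegral_heatKernel_mul_rpow_le (S := {z | 0 < δ z}) hβ hs hst hr
    (add_nonneg hx hy) (fun _ hz ↦ le_of_lt hz) fun z _ ↦
      le_add_add_norm_sub_of_convexOn_of_lipschitzWith hconv hlip hx hy hα.1.le hα.2.le z
  simp only [heatKernel_mul_heatKernel hα ht, mul_assoc (heatKernel n t x y)]
  rw [integral_const_mul]
  refine (mul_le_mul_of_nonneg_left hbound (heatKernel_nonneg ht.le x y)).trans_eq ?_
  rw [show 8 * α * (1 - α) * t = 8 * (α * (1 - α) * t) by ring]
  ring

/-- There is a constant `c > 0`, depending only on `n` and `β`, such that for every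
`α ∈ (0,1)`, every half-space `H = {z : ⟪z − p, u⟫ > 0}` (with `‖u‖ = 1`), all `x, y ∈ H`,
every `r ≥ 0` and `t > 0`:
`∫_{H \ B((1−α)x+αy, r)} k(αt,x,z) k((1−α)t,z,y) δ_H(z)^β dz`
`≤ c k(t,x,y) t^{β/2} exp(−r²/(8α(1−α)t)) (1 + (δ_H(x)+δ_H(y))/√t)^β`. -/
theorem stmt0 (n : ℕ) (hn : 1 ≤ n) (β : ℝ) (hβ : 0 ≤ β) :
    ∃ c : ℝ, 0 < c ∧
      ∀ α : ℝ, α ∈ Set.Ioo (0 : ℝ) 1 →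
      ∀ p u : EuclideanSpace ℝ (Fin n), ‖u‖ = 1 →
      ∀ x y : EuclideanSpace ℝ (Fin n),
        0 < ⟪x - p, u⟫ → 0 < ⟪y - p, u⟫ →
      ∀ r t : ℝ, 0 ≤ r → 0 < t →
      (∫ z in {z : EuclideanSpace ℝ (Fin n) | 0 < ⟪z - p, u⟫} \
          Metric.ball ((1 - α) • x + α • y) r,
        heatKernel n (α * t) x z * heatKernel n ((1 - α) * t) z y * ⟪z - p, u⟫ ^ β)
      ≤ c * heatKernel n t x y * t ^ (β / 2) *
          Real.exp (-r ^ 2 / (8 * α * (1 - α) * t)) *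
          (1 + (⟪x - p, u⟫ + ⟪y - p, u⟫) / Real.sqrt t) ^ β := by
  obtain ⟨c, hc, hbound⟩ := stmt0_general n β hβ
  exact ⟨c, hc, fun α hα p u hu x y hx hy ↦ hbound α hα _ (convexOn_inner_sub p u)
    ((NNReal.eq hu : ‖u‖₊ = 1) ▸ lipschitzWith_inner_sub p u) x y hx.le hy.le⟩
end

section
/- Fix real numbers α, β > 3/2. There exists a constant C > 0 depending only on α and β such that for all a, b, t > 0: I_{α,β}(t,a,b) ≤ C · exp(−(a+b)²/t) · [ ((t/a²)^{α−1} + (t/b²)^{β−1}) / t^{α+β−1} + ((a+b)^{α+β−2} / t^{α+β−1}) · √t / (a^{α−1} b^{β−1} √(t + ab)) ]. -/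
open MeasureTheory Real

/-- `I_{α,β}(t,a,b) = ∫₀ᵗ s^(−α) (t−s)^(−β) exp(−a²/s − b²/(t−s)) ds`. -/
noncomputable def Iab (α β t a b : ℝ) : ℝ :=
  ∫ s in Set.Ioo (0 : ℝ) t,
    s ^ (-α) * (t - s) ^ (-β) * Real.exp (-a ^ 2 / s - b ^ 2 / (t - s))

/-!
The exponent satisfies `a² / s + b² / (t - s) = (a + b)² / t + z (1 - w)² / w` with `z = a b / t`
and `w = b s / (a (t - s))`. Taking `w ∈ (0, ∞)` as the new variable therefore extracts
`exp (-(a + b)² / t)`, and the power `(b + a w) ^ (α + β - 2)` that appears is bounded by a multiple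
of `b ^ (α + β - 2) + (a w) ^ (α + β - 2)`. What remains are the two scaled Macdonald functions
`2 e^{2z} K_{α-1}(2z)` and `2 e^{2z} K_{β-1}(2z)`. Each `2 e^{2z} K_μ(2z)` is
`O(z ^ (-μ) + (1 + z) ^ (-1/2))`, the first term coming from a Gamma integral away from `w = 1` and
the second from a Gaussian peak at `w = 1`.
-/

lemma add_rpow_le_two_rpow_mul_rpow_add_rpow {p x y : ℝ} (hp : 0 ≤ p) (hx : 0 ≤ x) (hy : 0 ≤ y) :
    (x + y) ^ p ≤ 2 ^ p * (x ^ p + y ^ p) :=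
  calc (x + y) ^ p ≤ (2 * max x y) ^ p :=
        rpow_le_rpow (by positivity) (by linarith [le_max_left x y, le_max_right x y]) hp
    _ = 2 ^ p * max (x ^ p) (y ^ p) := by
        rw [mul_rpow zero_le_two (le_max_of_le_left hx), rpow_max hx hy hp]
    _ ≤ 2 ^ p * (x ^ p + y ^ p) := by
        gcongr
        exact max_le_add_of_nonneg (by positivity) (by positivity)

lemma integrableOn_rpow_mul_exp_neg_mul {s r : ℝ} (hs : -1 < s) (hr : 0 < r) :
    IntegrableOn (fun w : ℝ ↦ w ^ s * Real.exp (-r * w)) (Set.Ioi 0) := by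
  simpa only [rpow_one] using integrableOn_rpow_mul_exp_neg_mul_rpow hs one_pos hr

/-- The integrand of the scaled Macdonald function `scaledBesselK`. Its phase is normalized to
vanish at the saddle point `w = 1`. -/
noncomputable def besselKernel (μ z w : ℝ) : ℝ :=
  w ^ (μ - 1) * Real.exp (-(z * (1 - w) ^ 2 / w))

/-- The exponentially scaled Macdonald function `2 e^{2z} K_μ(2z)`, where `K_μ` is the modified
Bessel function of the second kind, encoded by its integral representation. It is only meaningful
for `0 < z`, where the integral converges. -/
noncomputable def scaledBesselK (μ z : ℝ) : ℝ :=
  ∫ w in Set.Ioi (0 : ℝ), besselKernel μ z w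

section BesselKernel

variable {μ z w : ℝ}

lemma besselKernel_nonneg (hw : 0 < w) : 0 ≤ besselKernel μ z w := by
  unfold besselKernel
  positivity

@[fun_prop]
lemma measurable_besselKernel (μ z : ℝ) : Measurable (besselKernel μ z) := by
  unfold besselKernel
  fun_prop

lemma rpow_mul_besselKernel (p : ℝ) (hw : 0 < w) :
    w ^ p * besselKernel μ z w = besselKernel (μ + p) z w := by
  rw [besselKernel, besselKernel, ← mul_assoc, ← rpow_add hw]
  ring_nf

lemma rpow_mul_besselKernel_rpow_neg_one (hw : 0 < w) :
    w ^ ((-1 : ℝ) - 1) * besselKernel μ z (w ^ (-1 : ℝ)) = besselKernel (-μ) z w := by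
  rw [besselKernel, besselKernel, ← mul_assoc, ← rpow_mul hw.le, ← rpow_add hw]
  congr 2
  · ring
  · rw [rpow_neg_one]
    field_simp
    ring

lemma scaledBesselK_neg (μ z : ℝ) : scaledBesselK (-μ) z = scaledBesselK μ z := by
  rw [scaledBesselK, scaledBesselK,
    ← integral_comp_rpow_Ioi (besselKernel μ z) (p := -1) (by norm_num)]
  refine setIntegral_congr_fun measurableSet_Ioi fun w hw ↦ ?_
  simp only [abs_neg, abs_one, one_mul, smul_eq_mul]
  exact (rpow_mul_besselKernel_rpow_neg_one hw).symm

lemma besselKernel_le_rpow_mul_exp (n : ℕ) (hz : 0 < z) (hw : 0 < w) :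
    besselKernel μ z w ≤
      Real.exp (2 * z) * (n.factorial / z ^ n) * (w ^ (μ + n - 1) * Real.exp (-z * w)) := by
  have hpole : Real.exp (-(z / w)) ≤ n.factorial / z ^ n * w ^ n := by
    have := pow_div_factorial_le_exp (z / w) (div_pos hz hw).le n
    rw [Real.exp_neg, inv_le_comm₀ (Real.exp_pos _) (by positivity)]
    refine le_of_eq_of_le ?_ this
    rw [div_pow]
    field_simp
  have hphase : -(z * (1 - w) ^ 2 / w) = 2 * z + -z * w + -(z / w) := by
    field_simp
    ring
  have hpow : w ^ (μ + n - 1) = w ^ (μ - 1) * w ^ n := by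
    rw [← rpow_natCast, ← rpow_add hw]
    ring_nf
  calc besselKernel μ z w
      = w ^ (μ - 1) * (Real.exp (2 * z) * Real.exp (-z * w) * Real.exp (-(z / w))) := by
        rw [besselKernel, hphase, Real.exp_add, Real.exp_add]
    _ ≤ w ^ (μ - 1) * (Real.exp (2 * z) * Real.exp (-z * w) * (n.factorial / z ^ n * w ^ n)) := by
        gcongr
    _ = _ := by
        rw [hpow]
        ring

lemma integrableOn_besselKernel (μ : ℝ) (hz : 0 < z) :
    IntegrableOn (besselKernel μ z) (Set.Ioi 0) := by
  obtain ⟨n, hn⟩ := exists_nat_gt (-μ)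
  have hdom := integrableOn_rpow_mul_exp_neg_mul (s := μ + n - 1) (by linarith) hz
  refine (hdom.const_mul (Real.exp (2 * z) * (n.factorial / z ^ n))).mono' (by fun_prop) ?_
  filter_upwards [ae_restrict_mem measurableSet_Ioi] with w hw
  rw [Real.norm_of_nonneg (besselKernel_nonneg hw)]
  exact besselKernel_le_rpow_mul_exp n hz hw

lemma div_four_le_sq_div (hw : 0 < w) (h : w ≤ 1 / 2 ∨ 2 ≤ w) : w / 4 ≤ (1 - w) ^ 2 / w := by
  rw [div_le_div_iff₀ (by norm_num) hw]
  rcases h with h | h <;> nlinarith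

lemma besselKernel_le_of_far (hz : 0 ≤ z) (hw : 0 < w) (h : w ≤ 1 / 2 ∨ 2 ≤ w) :
    besselKernel μ z w ≤ w ^ (μ - 1) * Real.exp (-(z / 4) * w) := by
  have hphase : z * (w / 4) ≤ z * ((1 - w) ^ 2 / w) :=
    mul_le_mul_of_nonneg_left (div_four_le_sq_div hw h) hz
  unfold besselKernel
  gcongr
  linarith [mul_div_assoc z ((1 - w) ^ 2) w]

-- Since `|w - 1| ≤ 1` here, raising the Gaussian parameter from `z` to `1 + z` costs only the
-- factor `exp (1 / 2)`; it keeps the integrated bound finite as `z → 0`.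
lemma besselKernel_le_of_near (hμ : 0 ≤ μ) (hz : 0 ≤ z) (hw : 1 / 2 ≤ w) (hw' : w ≤ 2) :
    besselKernel μ z w ≤
      2 ^ (μ + 1) * Real.exp (1 / 2) * Real.exp (-((1 + z) / 2) * (w - 1) ^ 2) := by
  have hw₀ : 0 < w := by linarith
  have hpow : w ^ (μ - 1) ≤ 2 ^ (μ + 1) :=
    calc w ^ (μ - 1) = w ^ μ * w⁻¹ := by rw [rpow_sub_one hw₀.ne', div_eq_mul_inv]
      _ ≤ 2 ^ μ * 2 := by
        gcongr
        rw [inv_le_comm₀ hw₀ two_pos]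
        linarith
      _ = 2 ^ (μ + 1) := (rpow_add_one two_ne_zero μ).symm
  have hphase : z * (1 - w) ^ 2 / 2 ≤ z * (1 - w) ^ 2 / w := by gcongr
  have hsq : (w - 1) ^ 2 ≤ 1 := by nlinarith
  rw [mul_assoc, ← Real.exp_add, besselKernel]
  gcongr
  linarith

lemma besselKernel_le (hμ : 0 ≤ μ) (hz : 0 ≤ z) (hw : 0 < w) :
    besselKernel μ z w ≤ w ^ (μ - 1) * Real.exp (-(z / 4) * w) +
      2 ^ (μ + 1) * Real.exp (1 / 2) * Real.exp (-((1 + z) / 2) * (w - 1) ^ 2) := by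
  by_cases h : w ≤ 1 / 2 ∨ 2 ≤ w
  · exact (besselKernel_le_of_far hz hw h).trans (le_add_of_nonneg_right (by positivity))
  · push Not at h
    exact (besselKernel_le_of_near hμ hz h.1.le h.2.le).trans
      (le_add_of_nonneg_left (by positivity))

lemma scaledBesselK_le (hμ : 0 < μ) (hz : 0 < z) :
    scaledBesselK μ z ≤ 4 ^ μ * Gamma μ * z ^ (-μ) +
      2 ^ (μ + 1) * Real.exp (1 / 2) * √(π / ((1 + z) / 2)) := by
  have hgauss : Integrable fun w : ℝ ↦ Real.exp (-((1 + z) / 2) * (w - 1) ^ 2) :=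
    (integrable_exp_neg_mul_sq (b := (1 + z) / 2) (by positivity)).comp_sub_right 1
  have hgamma := integrableOn_rpow_mul_exp_neg_mul (s := μ - 1) (r := z / 4)
    (by linarith) (by positivity)
  have hgauss_le : ∫ w in Set.Ioi (0 : ℝ), Real.exp (-((1 + z) / 2) * (w - 1) ^ 2) ≤
      √(π / ((1 + z) / 2)) := by
    rw [← integral_gaussian, ← integral_sub_right_eq_self (μ := volume) _ (1 : ℝ)]
    exact setIntegral_le_integral hgauss (.of_forall fun w ↦ (Real.exp_pos _).le)
  have hgamma_eq : ∫ w in Set.Ioi (0 : ℝ), w ^ (μ - 1) * Real.exp (-(z / 4) * w) =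
      4 ^ μ * Gamma μ * z ^ (-μ) := by
    simp only [neg_mul]
    rw [integral_rpow_mul_exp_neg_mul_Ioi hμ (by positivity), one_div_div,
      div_rpow (by norm_num) hz.le, rpow_neg hz.le]
    ring
  calc scaledBesselK μ z
      ≤ ∫ w in Set.Ioi (0 : ℝ), (w ^ (μ - 1) * Real.exp (-(z / 4) * w) +
          2 ^ (μ + 1) * Real.exp (1 / 2) * Real.exp (-((1 + z) / 2) * (w - 1) ^ 2)) :=
        setIntegral_mono_on (integrableOn_besselKernel μ hz)
          (hgamma.add (hgauss.integrableOn.const_mul _)) measurableSet_Ioi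
          fun w hw ↦ besselKernel_le hμ.le hz.le hw
    _ ≤ _ := by
        rw [integral_add hgamma (hgauss.integrableOn.const_mul _), integral_const_mul, hgamma_eq]
        gcongr

lemma exists_scaledBesselK_le (hμ : 0 < μ) : ∃ C : ℝ, 0 < C ∧ ∀ z : ℝ, 0 < z →
    scaledBesselK μ z ≤ C * (z ^ (-μ) + 1 / √(1 + z)) := by
  set A := 4 ^ μ * Gamma μ
  set B := 2 ^ (μ + 1) * Real.exp (1 / 2) * √(2 * π) with hB
  have hA₀ : 0 < A := mul_pos (by positivity) (Gamma_pos_of_pos hμ)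
  have hB₀ : 0 < B := by positivity
  refine ⟨A + B, by positivity, fun z hz ↦ ?_⟩
  have hsqrt : √(π / ((1 + z) / 2)) = √(2 * π) * (1 / √(1 + z)) := by
    rw [mul_one_div, ← sqrt_div (by positivity)]
    congr 1
    field_simp
  calc scaledBesselK μ z ≤ A * z ^ (-μ) + B * (1 / √(1 + z)) := by
        rw [hB, mul_assoc _ √(2 * π), ← hsqrt]
        exact scaledBesselK_le hμ hz
    _ ≤ (A + B) * z ^ (-μ) + (A + B) * (1 / √(1 + z)) := by
        gcongr <;> linarith
    _ = (A + B) * (z ^ (-μ) + 1 / √(1 + z)) := (mul_add ..).symm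

lemma add_rpow_mul_besselKernel_le {a b p : ℝ} (ha : 0 ≤ a) (hb : 0 ≤ b) (hp : 0 ≤ p)
    (hw : 0 < w) :
    (b + a * w) ^ p * besselKernel μ z w ≤
      2 ^ p * (b ^ p * besselKernel μ z w + a ^ p * besselKernel (μ + p) z w) := by
  have hnonneg := besselKernel_nonneg (μ := μ) (z := z) hw
  calc (b + a * w) ^ p * besselKernel μ z w
      ≤ 2 ^ p * (b ^ p + (a * w) ^ p) * besselKernel μ z w := by
        gcongr
        exact add_rpow_le_two_rpow_mul_rpow_add_rpow hp hb (by positivity)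
    _ = 2 ^ p * (b ^ p * besselKernel μ z w + a ^ p * (w ^ p * besselKernel μ z w)) := by
        rw [mul_rpow ha hw.le]
        ring
    _ = _ := by rw [rpow_mul_besselKernel p hw]

lemma integral_add_rpow_mul_besselKernel_le {a b p : ℝ} (ha : 0 ≤ a) (hb : 0 ≤ b) (hp : 0 ≤ p)
    (hz : 0 < z) :
    ∫ w in Set.Ioi (0 : ℝ), (b + a * w) ^ p * besselKernel μ z w ≤
      2 ^ p * (b ^ p * scaledBesselK μ z + a ^ p * scaledBesselK (μ + p) z) := by
  have hb_int := (integrableOn_besselKernel μ hz).const_mul (b ^ p)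
  have ha_int := (integrableOn_besselKernel (μ + p) hz).const_mul (a ^ p)
  calc ∫ w in Set.Ioi (0 : ℝ), (b + a * w) ^ p * besselKernel μ z w
      ≤ ∫ w in Set.Ioi (0 : ℝ),
          2 ^ p * (b ^ p * besselKernel μ z w + a ^ p * besselKernel (μ + p) z w) := by
        refine integral_mono_of_nonneg ?_ ((hb_int.add ha_int).const_mul _) ?_
        · filter_upwards [ae_restrict_mem measurableSet_Ioi] with w (hw : 0 < w)
          exact mul_nonneg (by positivity) (besselKernel_nonneg hw)
        · filter_upwards [ae_restrict_mem measurableSet_Ioi] with w hw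
          exact add_rpow_mul_besselKernel_le ha hb hp hw
    _ = _ := by
        rw [integral_const_mul, integral_add hb_int ha_int, integral_const_mul,
          integral_const_mul, scaledBesselK, scaledBesselK]

end BesselKernel

section ChangeOfVariables

variable {a b t : ℝ}

lemma bijOn_mul_div_add_mul (ha : 0 < a) (hb : 0 < b) (ht : 0 < t) :
    Set.BijOn (fun w ↦ t * a * w / (b + a * w)) (Set.Ioi 0) (Set.Ioo 0 t) := by
  refine Set.InvOn.bijOn (f' := fun s ↦ b * s / (a * (t - s))) ⟨?_, ?_⟩ ?_ ?_
  · intro w (hw : 0 < w)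
    have hcompl : t - t * a * w / (b + a * w) = t * b / (b + a * w) := by
      field_simp
      ring
    simp only [hcompl]
    field_simp
  · rintro s ⟨-, hs⟩
    have hts : t - s ≠ 0 := (sub_pos.2 hs).ne'
    have hden : b + a * (b * s / (a * (t - s))) = b * t / (t - s) := by
      field_simp
      ring
    simp only [hden]
    field_simp
  · intro w (hw : 0 < w)
    refine ⟨by positivity, ?_⟩
    rw [div_lt_iff₀ (by positivity)]
    linarith [mul_pos ht hb]
  · rintro s ⟨hs, hst⟩
    have hts : 0 < t - s := sub_pos.2 hst
    exact div_pos (mul_pos hb hs) (mul_pos ha hts)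

lemma hasDerivAt_mul_div_add_mul {w : ℝ} (hw : b + a * w ≠ 0) :
    HasDerivAt (fun w ↦ t * a * w / (b + a * w)) (t * a * b / (b + a * w) ^ 2) w := by
  have hnum : HasDerivAt (fun w ↦ t * a * w) (t * a) w := hasDerivAt_const_mul (t * a)
  have hden : HasDerivAt (fun w ↦ b + a * w) a w := (hasDerivAt_const_mul a).const_add b
  refine (hnum.div hden hw).congr_deriv ?_
  ring

lemma integral_Ioo_eq_integral_Ioi_smul {E : Type*} [NormedAddCommGroup E] [NormedSpace ℝ E]
    (f : ℝ → E) (ha : 0 < a) (hb : 0 < b) (ht : 0 < t) :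
    ∫ s in Set.Ioo 0 t, f s =
      ∫ w in Set.Ioi 0, (t * a * b / (b + a * w) ^ 2) • f (t * a * w / (b + a * w)) := by
  have hbij := bijOn_mul_div_add_mul ha hb ht
  rw [← hbij.image_eq, integral_image_eq_integral_abs_deriv_smul
    (f' := fun w ↦ t * a * b / (b + a * w) ^ 2) measurableSet_Ioi _ hbij.injOn]
  · refine setIntegral_congr_fun measurableSet_Ioi fun w (hw : 0 < w) ↦ ?_
    simp only [abs_of_pos (show 0 < t * a * b / (b + a * w) ^ 2 by positivity)]
  · intro w (hw : 0 < w)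
    exact (hasDerivAt_mul_div_add_mul (by positivity)).hasDerivWithinAt

lemma rpow_neg_mul_rpow_neg_mul_jacobian (α β : ℝ) {w D : ℝ} (ha : 0 < a) (hb : 0 < b)
    (ht : 0 < t) (hw : 0 < w) (hD : 0 < D) :
    t * a * b / D ^ 2 * ((t * a * w / D) ^ (-α) * (t * b / D) ^ (-β)) =
      D ^ (α + β - 2) * w ^ (-α) / (t ^ (α + β - 1) * (a ^ (α - 1) * b ^ (β - 1))) := by
  have hDpow : D ^ (α + β - 2) = D ^ α * D ^ β / D ^ 2 := by
    rw [rpow_sub hD, rpow_add hD, rpow_two]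
  have htpow : t ^ (α + β - 1) = t ^ α * t ^ β / t := by
    rw [rpow_sub_one ht.ne', rpow_add ht]
  rw [hDpow, htpow, rpow_sub_one ha.ne', rpow_sub_one hb.ne', rpow_neg (by positivity),
    rpow_neg (by positivity), rpow_neg hw.le, div_rpow (by positivity) hD.le,
    div_rpow (by positivity) hD.le, mul_rpow (by positivity) hw.le, mul_rpow ht.le ha.le,
    mul_rpow ht.le hb.le]
  field_simp

lemma Iab_eq_mul_integral_besselKernel (α β : ℝ) (ha : 0 < a) (hb : 0 < b) (ht : 0 < t) :
    Iab α β t a b =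
      Real.exp (-(a + b) ^ 2 / t) / (t ^ (α + β - 1) * (a ^ (α - 1) * b ^ (β - 1))) *
        ∫ w in Set.Ioi (0 : ℝ),
          (b + a * w) ^ (α + β - 2) * besselKernel (1 - α) (a * b / t) w := by
  rw [Iab, integral_Ioo_eq_integral_Ioi_smul _ ha hb ht, ← integral_const_mul]
  refine setIntegral_congr_fun measurableSet_Ioi fun w (hw : 0 < w) ↦ ?_
  have hcompl : t - t * a * w / (b + a * w) = t * b / (b + a * w) := by
    field_simp
    ring
  have hexp : Real.exp (-a ^ 2 / (t * a * w / (b + a * w)) - b ^ 2 / (t * b / (b + a * w))) =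
      Real.exp (-(a + b) ^ 2 / t) * Real.exp (-(a * b / t * (1 - w) ^ 2 / w)) := by
    rw [← Real.exp_add]
    congr 1
    field_simp
    ring
  simp only [smul_eq_mul, hcompl, hexp]
  rw [← mul_assoc, rpow_neg_mul_rpow_neg_mul_jacobian α β ha hb ht hw (by positivity),
    besselKernel, sub_sub_cancel_left]
  ring

lemma Iab_le_scaledBesselK {α β : ℝ} (hαβ : 2 ≤ α + β) (ha : 0 < a) (hb : 0 < b) (ht : 0 < t) :
    Iab α β t a b ≤ 2 ^ (α + β - 2) * (Real.exp (-(a + b) ^ 2 / t) / t ^ (α + β - 1)) *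
      ((b / a) ^ (α - 1) * scaledBesselK (α - 1) (a * b / t) +
        (a / b) ^ (β - 1) * scaledBesselK (β - 1) (a * b / t)) := by
  have hsplit : α + β - 2 = (α - 1) + (β - 1) := by ring
  have hbound := integral_add_rpow_mul_besselKernel_le (μ := 1 - α) (z := a * b / t) ha.le hb.le
    (sub_nonneg.2 hαβ) (by positivity)
  rw [← neg_sub α 1, scaledBesselK_neg, show -(α - 1) + (α + β - 2) = β - 1 by ring, neg_sub]
    at hbound
  rw [Iab_eq_mul_integral_besselKernel α β ha hb ht]
  refine (mul_le_mul_of_nonneg_left hbound (by positivity)).trans_eq ?_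
  rw [div_rpow hb.le ha.le, div_rpow ha.le hb.le, hsplit, rpow_add ha, rpow_add hb]
  field_simp

end ChangeOfVariables

section Scaling

variable {a b t μ ν : ℝ}

lemma div_rpow_mul_rpow_neg (μ : ℝ) (ha : 0 < a) (hb : 0 < b) (ht : 0 < t) :
    (b / a) ^ μ * (a * b / t) ^ (-μ) = (t / a ^ 2) ^ μ := by
  rw [rpow_neg (by positivity), ← inv_rpow (by positivity),
    ← mul_rpow (by positivity) (by positivity)]
  congr 1
  field_simp

lemma div_rpow_le_add_rpow_div (hμν : 0 ≤ μ + ν) (ha : 0 < a) (hb : 0 < b) :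
    (b / a) ^ μ ≤ (a + b) ^ (μ + ν) / (a ^ μ * b ^ ν) :=
  calc (b / a) ^ μ = b ^ (μ + ν) / (a ^ μ * b ^ ν) := by
        rw [div_rpow hb.le ha.le, rpow_add hb]
        field_simp
    _ ≤ _ := by
        gcongr
        linarith

lemma one_div_sqrt_one_add_div (x : ℝ) (ht : 0 < t) : 1 / √(1 + x / t) = √t / √(t + x) := by
  rw [one_add_div ht.ne', sqrt_div' _ ht.le, one_div_div]

lemma exists_div_rpow_mul_scaledBesselK_le (hμ : 0 < μ) :
    ∃ C : ℝ, 0 < C ∧ ∀ ν a b t : ℝ, 0 ≤ μ + ν → 0 < a → 0 < b → 0 < t →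
      (b / a) ^ μ * scaledBesselK μ (a * b / t) ≤
        C * ((t / a ^ 2) ^ μ + (a + b) ^ (μ + ν) * (√t / (a ^ μ * b ^ ν * √(t + a * b)))) := by
  obtain ⟨C, hC, hbound⟩ := exists_scaledBesselK_le hμ
  refine ⟨C, hC, fun ν a b t hμν ha hb ht ↦ ?_⟩
  calc (b / a) ^ μ * scaledBesselK μ (a * b / t)
      ≤ (b / a) ^ μ * (C * ((a * b / t) ^ (-μ) + 1 / √(1 + a * b / t))) := by
        gcongr
        exact hbound _ (by positivity)
    _ = C * ((t / a ^ 2) ^ μ + (b / a) ^ μ * (√t / √(t + a * b))) := by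
        rw [← div_rpow_mul_rpow_neg μ ha hb ht, one_div_sqrt_one_add_div _ ht]
        ring
    _ ≤ C * ((t / a ^ 2) ^ μ +
          (a + b) ^ (μ + ν) / (a ^ μ * b ^ ν) * (√t / √(t + a * b))) := by
        gcongr
        exact div_rpow_le_add_rpow_div hμν ha hb
    _ = _ := by rw [div_mul_div_comm, mul_div_assoc]

end Scaling

theorem stmt3_general (α β : ℝ) (hα : 1 < α) (hβ : 1 < β) :
    ∃ C : ℝ, 0 < C ∧ ∀ a b t : ℝ, 0 < a → 0 < b → 0 < t →
      Iab α β t a b ≤ C * Real.exp (-(a + b) ^ 2 / t) *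
        (((t / a ^ 2) ^ (α - 1) + (t / b ^ 2) ^ (β - 1)) / t ^ (α + β - 1) +
          ((a + b) ^ (α + β - 2) / t ^ (α + β - 1)) *
            (Real.sqrt t / (a ^ (α - 1) * b ^ (β - 1) * Real.sqrt (t + a * b)))) := by
  obtain ⟨C₁, hC₁, hα_le⟩ := exists_div_rpow_mul_scaledBesselK_le (sub_pos.2 hα)
  obtain ⟨C₂, hC₂, hβ_le⟩ := exists_div_rpow_mul_scaledBesselK_le (sub_pos.2 hβ)
  refine ⟨2 ^ (α + β - 2) * (C₁ + C₂), by positivity, fun a b t ha hb ht ↦ ?_⟩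
  have hsum : (α - 1) + (β - 1) = α + β - 2 := by ring
  have h₁ := hα_le (β - 1) a b t (by linarith) ha hb ht
  have h₂ := hβ_le (α - 1) b a t (by linarith) hb ha ht
  rw [hsum] at h₁
  rw [add_comm (β - 1), hsum, add_comm b, mul_comm b, mul_comm (b ^ (β - 1))] at h₂
  set S := (a + b) ^ (α + β - 2) * (√t / (a ^ (α - 1) * b ^ (β - 1) * √(t + a * b))) with hS
  set T₁ := (t / a ^ 2) ^ (α - 1)
  set T₂ := (t / b ^ 2) ^ (β - 1)
  have hT₁₀ : 0 ≤ T₁ := by positivity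
  have hT₂₀ : 0 ≤ T₂ := by positivity
  calc Iab α β t a b
      ≤ 2 ^ (α + β - 2) * (Real.exp (-(a + b) ^ 2 / t) / t ^ (α + β - 1)) *
          (C₁ * (T₁ + S) + C₂ * (T₂ + S)) := by
        refine (Iab_le_scaledBesselK (by linarith) ha hb ht).trans ?_
        gcongr
    _ ≤ 2 ^ (α + β - 2) * (Real.exp (-(a + b) ^ 2 / t) / t ^ (α + β - 1)) *
          (C₁ * (T₁ + T₂ + S) + C₂ * (T₁ + T₂ + S)) := by
        gcongr <;> linarith
    _ = _ := by
        rw [hS]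
        ring

/-- For fixed `α, β > 3/2` there is a constant `C > 0` depending only on `α, β` such that
for all `a, b, t > 0`:
`I_{α,β}(t,a,b) ≤ C exp(−(a+b)²/t) (((t/a²)^{α−1} + (t/b²)^{β−1})/t^{α+β−1}`
`+ ((a+b)^{α+β−2}/t^{α+β−1}) √t/(a^{α−1} b^{β−1} √(t+ab)))`. -/
theorem stmt3 (α β : ℝ) (hα : 3 / 2 < α) (hβ : 3 / 2 < β) :
    ∃ C : ℝ, 0 < C ∧ ∀ a b t : ℝ, 0 < a → 0 < b → 0 < t →
      Iab α β t a b ≤ C * Real.exp (-(a + b) ^ 2 / t) *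
        (((t / a ^ 2) ^ (α - 1) + (t / b ^ 2) ^ (β - 1)) / t ^ (α + β - 1) +
          ((a + b) ^ (α + β - 2) / t ^ (α + β - 1)) *
            (Real.sqrt t / (a ^ (α - 1) * b ^ (β - 1) * Real.sqrt (t + a * b)))) := by
  exact stmt3_general α β (by linarith) (by linarith)
end

section
/- Fix real numbers α, β > 3/2. There exists a constant c > 0 depending only on α and β such that for all a, b, t > 0: I_{α,β}(t,a,b) ≥ c · exp(−(a+b)²/t) · [ ((t/a²)^{α−1} + (t/b²)^{β−1}) / t^{α+β−1} + ((a+b)^{α+β−2} / t^{α+β−1}) · √t / (a^{α−1} b^{β−1} √(t + ab)) ]. -/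
open MeasureTheory Real

/-
Rescaling reduces everything to `t = 1`, where the three terms on the left-hand side come from two
kinds of windows of integration. If `a * b ≤ 1` and `a ≤ 1`, then on `[a ^ 2 / 4, a ^ 2 / 2]` the
exponential is at least a constant times `exp (-(a + b) ^ 2)` and the weight is at least
`a ^ (-2 * α)`; this gives the first term, and if `b ≤ 1` the reflection `s ↦ 1 - s` gives the
second. If `1 ≤ a * b`, completing the square,
`a ^ 2 / u + b ^ 2 / (1 - u) = (a + b) ^ 2 + ((a + b) * u - a) ^ 2 / (u * (1 - u))`,
exhibits the saddle point `a / (a + b)`, and a window of length about `√(a * b) / (a + b) ^ 2` there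
gives the third term. In each regime the terms not produced by a window are dominated by those that
are: for `1 ≤ a * b` this amounts to `√(a * b) ≤ (a * b) ^ (α - 1)`, that is `3 / 2 ≤ α`, together
with its counterpart for `β`.
-/

section

variable {α β a b t : ℝ}

lemma rpow_le_rpow_mul_exp {x : ℝ} (hα : 0 < α) (hx : 0 ≤ x) : x ^ α ≤ α ^ α * exp x := by
  have hle : x / α ≤ exp (x / α) := by linarith [add_one_le_exp (x / α)]
  calc x ^ α = α ^ α * (x / α) ^ α := by
        rw [← mul_rpow hα.le (by positivity), mul_div_cancel₀ _ hα.ne']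
    _ ≤ α ^ α * exp (x / α) ^ α := by gcongr
    _ = α ^ α * exp x := by rw [← exp_mul, div_mul_cancel₀ _ hα.ne']

lemma rpow_neg_mul_exp_neg_div_le {κ s : ℝ} (hα : 0 < α) (hκ : 0 < κ) (hs : 0 < s) :
    s ^ (-α) * exp (-κ / s) ≤ (α / κ) ^ α := by
  rw [neg_div, exp_neg, ← div_eq_mul_inv, div_le_iff₀ (exp_pos _)]
  calc s ^ (-α) = (κ / s) ^ α / κ ^ α := by
        rw [← div_rpow (by positivity) hκ.le, div_div_cancel_left' hκ.ne', inv_rpow hs.le,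
          rpow_neg hs.le]
    _ ≤ α ^ α * exp (κ / s) / κ ^ α := by
        gcongr
        exact rpow_le_rpow_mul_exp hα (by positivity)
    _ = (α / κ) ^ α * exp (κ / s) := by rw [div_rpow hα.le hκ.le]; ring

lemma integrableOn_Iab (hα : 0 < α) (hβ : 0 < β) (ha : a ≠ 0) (hb : b ≠ 0) :
    IntegrableOn (fun s ↦ s ^ (-α) * (t - s) ^ (-β) * exp (-a ^ 2 / s - b ^ 2 / (t - s)))
      (Set.Ioo 0 t) := by
  refine Measure.integrableOn_of_bounded (M := (α / a ^ 2) ^ α * (β / b ^ 2) ^ β) (by simp)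
    (Measurable.aestronglyMeasurable (by fun_prop)) <|
    ae_restrict_of_forall_mem measurableSet_Ioo fun s ⟨hs, hst⟩ ↦ ?_
  have hts : 0 < t - s := sub_pos.2 hst
  rw [norm_of_nonneg (by positivity), sub_eq_add_neg (_ / _), exp_add, ← neg_div, mul_mul_mul_comm]
  gcongr
  · exact rpow_neg_mul_exp_neg_div_le hα (by positivity) hs
  · exact rpow_neg_mul_exp_neg_div_le hβ (by positivity) hts

lemma mul_sub_le_Iab (hα : 0 < α) (hβ : 0 < β) (ha : a ≠ 0) (hb : b ≠ 0) {x y m : ℝ}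
    (hx : 0 < x) (hxy : x ≤ y) (hyt : y < t)
    (hm : ∀ s ∈ Set.Icc x y,
      m ≤ s ^ (-α) * (t - s) ^ (-β) * exp (-a ^ 2 / s - b ^ 2 / (t - s))) :
    m * (y - x) ≤ Iab α β t a b := by
  have hsub : Set.Icc x y ⊆ Set.Ioo 0 t := Set.Icc_subset_Ioo hx hyt
  have hint := integrableOn_Iab (t := t) hα hβ ha hb
  calc m * (y - x) = m * volume.real (Set.Icc x y) := by rw [volume_real_Icc_of_le hxy]
    _ ≤ ∫ s in Set.Icc x y, s ^ (-α) * (t - s) ^ (-β) * exp (-a ^ 2 / s - b ^ 2 / (t - s)) :=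
        setIntegral_ge_of_const_le_real measurableSet_Icc measure_Icc_lt_top.ne hm
          (hint.mono_set hsub)
    _ ≤ Iab α β t a b := by
        refine setIntegral_mono_set hint ?_ hsub.eventuallyLE
        refine ae_restrict_of_forall_mem measurableSet_Ioo fun s ⟨hs, hst⟩ ↦ ?_
        have : 0 < t - s := sub_pos.2 hst
        simp only [Pi.zero_apply]
        positivity

lemma Iab_comm (α β t a b : ℝ) : Iab α β t a b = Iab β α t b a := by
  have h := (Measure.measurePreserving_sub_left volume t).setIntegral_preimage_emb
    (MeasurableEquiv.subLeft t).measurableEmbedding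
    (fun s ↦ s ^ (-α) * (t - s) ^ (-β) * exp (-a ^ 2 / s - b ^ 2 / (t - s))) (Set.Ioo 0 t)
  rw [Set.preimage_const_sub_Ioo, sub_self, sub_zero] at h
  rw [Iab, ← h, Iab]
  congr! 2 with s
  rw [sub_sub_cancel, mul_comm ((t - s) ^ (-α))]
  ring_nf

lemma Iab_scaling {r : ℝ} (hr : 0 < r) (α β t a b : ℝ) :
    Iab α β (r * t) (√r * a) (√r * b) = r ^ (1 - α - β) * Iab α β t a b := by
  have h := Measure.setIntegral_comp_smul_of_pos volume
    (fun s ↦ s ^ (-α) * (r * t - s) ^ (-β) * exp (-(√r * a) ^ 2 / s - (√r * b) ^ 2 / (r * t - s)))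
    (Set.Ioo 0 t) hr
  rw [LinearOrderedField.smul_Ioo hr, mul_zero, Module.finrank_self, pow_one, smul_eq_mul,
    eq_inv_mul_iff_mul_eq₀ hr.ne'] at h
  rw [Iab, ← h, Iab, ← integral_const_mul, ← integral_const_mul]
  refine setIntegral_congr_fun measurableSet_Ioo fun s ⟨hs, hst⟩ ↦ ?_
  have hexp : -(√r * a) ^ 2 / (r * s) - (√r * b) ^ 2 / (r * (t - s)) =
      -a ^ 2 / s - b ^ 2 / (t - s) := by
    rw [mul_pow, mul_pow, sq_sqrt hr.le, ← mul_neg, mul_div_mul_left _ _ hr.ne',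
      mul_div_mul_left _ _ hr.ne']
  have hpow : r ^ (1 - α - β) = r * r ^ (-α) * r ^ (-β) := by
    rw [sub_eq_add_neg, sub_eq_add_neg, rpow_add hr, rpow_add hr, rpow_one]
  simp only [smul_eq_mul]
  rw [← mul_sub, hexp, hpow, mul_rpow hr.le hs.le, mul_rpow hr.le (sub_pos.2 hst).le]
  ring

lemma Iab_eq_rpow_mul_Iab_one (ht : 0 < t) (α β a b : ℝ) :
    Iab α β t a b = t ^ (1 - α - β) * Iab α β 1 (a / √t) (b / √t) := by
  have hne : √t ≠ 0 := (sqrt_pos.2 ht).ne'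
  rw [← Iab_scaling ht, mul_one, mul_div_cancel₀ _ hne, mul_div_cancel₀ _ hne]

lemma inv_rpow_sub_one {x : ℝ} (hx : 0 < x) (γ : ℝ) : x⁻¹ ^ (γ - 1) = x ^ (-γ) * x := by
  rw [inv_rpow hx.le, ← rpow_neg hx.le, neg_sub, sub_eq_neg_add, rpow_add_one hx.ne']

lemma neg_sq_sub_five_le_of_mem_Icc (ha : 0 < a) (hb : 0 ≤ b) (ha₁ : a ≤ 1) (hab : a * b ≤ 1)
    {u : ℝ} (hu : u ∈ Set.Icc (a ^ 2 / 4) (a ^ 2 / 2)) :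
    -b ^ 2 - 5 ≤ -a ^ 2 / u - b ^ 2 / (1 - u) := by
  have ha_sq : a ^ 2 ≤ 1 := pow_le_one₀ ha.le ha₁
  have hu₀ : 0 < u := lt_of_lt_of_le (by positivity) hu.1
  have hu₁ : 0 < 1 - u := by linarith [hu.2]
  have hleft : a ^ 2 / u ≤ 4 := by
    rw [div_le_iff₀ hu₀]
    linarith [hu.1]
  have hright : b ^ 2 / (1 - u) ≤ b ^ 2 + 1 := by
    have hab_sq : a ^ 2 * b ^ 2 ≤ 1 := by
      rw [← mul_pow]
      exact pow_le_one₀ (by positivity) hab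
    rw [div_le_iff₀ hu₁]
    nlinarith [mul_le_mul_of_nonneg_right hu.2 (sq_nonneg b), hu.2]
  rw [neg_div]
  linarith

lemma exp_mul_rpow_le_Iab_one_of_le_one (hα : 0 < α) (hβ : 0 < β) (ha : 0 < a) (hb : 0 < b)
    (ha₁ : a ≤ 1) (hab : a * b ≤ 1) :
    exp (-5) / 4 * exp (-(a + b) ^ 2) * (1 / a ^ 2) ^ (α - 1) ≤ Iab α β 1 a b := by
  have ha_sq : a ^ 2 ≤ 1 := pow_le_one₀ ha.le ha₁
  calc exp (-5) / 4 * exp (-(a + b) ^ 2) * (1 / a ^ 2) ^ (α - 1)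
      = (a ^ 2) ^ (-α) * 1 * exp (-(a + b) ^ 2 - 5) * (a ^ 2 / 2 - a ^ 2 / 4) := by
        rw [one_div, inv_rpow_sub_one (by positivity), sub_eq_add_neg _ (5 : ℝ), exp_add]
        ring
    _ ≤ Iab α β 1 a b := by
        refine mul_sub_le_Iab hα hβ ha.ne' hb.ne' (by positivity) (by linarith [sq_nonneg a])
          (by linarith) fun u hu ↦ ?_
        have hu₀ : 0 < u := lt_of_lt_of_le (by positivity) hu.1
        have hu₁ : 0 < 1 - u := by linarith [hu.2]
        have hexp := neg_sq_sub_five_le_of_mem_Icc ha hb.le ha₁ hab hu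
        gcongr ?_ * ?_ * exp ?_
        · exact rpow_le_rpow_of_nonpos hu₀ (by linarith [hu.2]) (by linarith)
        · exact one_le_rpow_of_pos_of_le_one_of_nonpos hu₁ (by linarith) (by linarith)
        · nlinarith [mul_pos ha hb]

lemma exp_mul_rpow_le_Iab_one (hα : 1 ≤ α) (hβ : 1 ≤ β) (ha : 0 < a) (hb : 0 < b)
    (hab : a * b ≤ 1) :
    exp (-5) / 4 * exp (-(a + b) ^ 2) * (1 / a ^ 2) ^ (α - 1) ≤ Iab α β 1 a b := by
  rcases le_total a 1 with ha₁ | ha₁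
  · exact exp_mul_rpow_le_Iab_one_of_le_one (by linarith) (by linarith) ha hb ha₁ hab
  · have hb₁ : b ≤ 1 := (le_mul_of_one_le_left hb.le ha₁).trans hab
    have hle : (1 / a ^ 2) ^ (α - 1) ≤ (1 / b ^ 2) ^ (β - 1) :=
      calc (1 / a ^ 2) ^ (α - 1) ≤ 1 :=
            rpow_le_one (by positivity) (div_le_one_of_le₀ (one_le_pow₀ ha₁) (by positivity))
              (by linarith)
        _ ≤ (1 / b ^ 2) ^ (β - 1) :=
            one_le_rpow (one_le_one_div (by positivity) (pow_le_one₀ hb.le hb₁)) (by linarith)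
    calc exp (-5) / 4 * exp (-(a + b) ^ 2) * (1 / a ^ 2) ^ (α - 1)
        ≤ exp (-5) / 4 * exp (-(b + a) ^ 2) * (1 / b ^ 2) ^ (β - 1) := by
          rw [add_comm b a]
          gcongr
      _ ≤ Iab β α 1 b a :=
          exp_mul_rpow_le_Iab_one_of_le_one (by linarith) (by linarith) hb ha hb₁
            (by rwa [mul_comm])
      _ = Iab α β 1 a b := Iab_comm ..

/-- The contribution of the saddle point `a / (a + b)` to `Iab α β 1 a b`, without its
exponential factor `exp (-(a + b) ^ 2)`. -/
noncomputable def saddleTerm (α β a b : ℝ) : ℝ :=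
  ((a + b) / a) ^ (α - 1) * ((a + b) / b) ^ (β - 1) / √(1 + a * b)

lemma saddleTerm_comm (α β a b : ℝ) : saddleTerm α β a b = saddleTerm β α b a := by
  simp only [saddleTerm, add_comm b a, mul_comm b a, mul_comm (((a + b) / a) ^ (α - 1))]

lemma saddleTerm_pos (ha : 0 < a) (hb : 0 < b) : 0 < saddleTerm α β a b := by
  unfold saddleTerm
  positivity

lemma saddleTerm_div_sqrt (ha : 0 < a) (hb : 0 < b) (ht : 0 < t) :
    saddleTerm α β (a / √t) (b / √t) =
      (a + b) ^ (α + β - 2) * (√t / (a ^ (α - 1) * b ^ (β - 1) * √(t + a * b))) := by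
  have hne : √t ≠ 0 := (sqrt_pos.2 ht).ne'
  have hsqrt : √(1 + a / √t * (b / √t)) = √(t + a * b) / √t := by
    rw [← sqrt_div' _ ht.le, div_mul_div_comm, mul_self_sqrt ht.le, add_div, div_self ht.ne']
  have hpow : (a + b) ^ (α + β - 2) = (a + b) ^ (α - 1) * (a + b) ^ (β - 1) := by
    rw [← rpow_add (by positivity)]
    ring_nf
  rw [saddleTerm, ← add_div, div_div_div_cancel_right₀ hne, div_div_div_cancel_right₀ hne, hsqrt,
    hpow, div_rpow (by positivity) ha.le, div_rpow (by positivity) hb.le, div_div_eq_mul_div,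
    div_mul_div_comm, div_mul_eq_mul_div, div_div, mul_div_assoc]

/-- An interval on which the exponent `a ^ 2 / u + b ^ 2 / (1 - u)` stays within a constant of its
minimum `(a + b) ^ 2` when `1 ≤ a * b`. It starts at the minimiser `a / (a + b)` and its length is
of the order of the inverse square root of the second derivative there. -/
def saddleWindow (a b : ℝ) : Set ℝ :=
  Set.Icc (a / (a + b)) (a / (a + b) + √(a * b) / (2 * (a + b) ^ 2))

lemma one_sub_div_add (h : a + b ≠ 0) : 1 - a / (a + b) = b / (a + b) := by
  rw [one_sub_div h, add_sub_cancel_left]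

lemma sqrt_mul_div_le (ha : 0 < a) (hb : 0 < b) (hab : 1 ≤ a * b) :
    √(a * b) / (2 * (a + b) ^ 2) ≤ a / (a + b) / 2 := by
  have hsqrt : √(a * b) ≤ a * b := sqrt_le_self_iff.2 (.inr hab)
  rw [div_div, div_le_div_iff₀ (by positivity) (by positivity)]
  calc √(a * b) * ((a + b) * 2) ≤ a * b * ((a + b) * 2) := by gcongr
    _ ≤ a * (a + b) * ((a + b) * 2) := by gcongr; linarith
    _ = a * (2 * (a + b) ^ 2) := by ring

lemma le_of_mem_saddleWindow (ha : 0 < a) (hb : 0 < b) (hab : 1 ≤ a * b) {u : ℝ}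
    (hu : u ∈ saddleWindow a b) : u ≤ 3 / 2 * (a / (a + b)) := by
  linarith [hu.2, sqrt_mul_div_le ha hb hab]

lemma le_one_sub_of_mem_saddleWindow (ha : 0 < a) (hb : 0 < b) (hab : 1 ≤ a * b) {u : ℝ}
    (hu : u ∈ saddleWindow a b) : b / (a + b) / 2 ≤ 1 - u := by
  have hwidth : √(a * b) / (2 * (a + b) ^ 2) ≤ b / (a + b) / 2 := by
    simpa only [mul_comm b a, add_comm b a] using sqrt_mul_div_le hb ha (by rwa [mul_comm])
  linarith [hu.2, one_sub_div_add (add_pos ha hb).ne']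

lemma saddleWindow_subset_Ioo (ha : 0 < a) (hb : 0 < b) (hab : 1 ≤ a * b) :
    saddleWindow a b ⊆ Set.Ioo 0 1 := fun _ hu ↦
  ⟨lt_of_lt_of_le (by positivity) hu.1,
    sub_pos.1 (lt_of_lt_of_le (by positivity) (le_one_sub_of_mem_saddleWindow ha hb hab hu))⟩

lemma sq_div_add_sq_div_one_sub {u : ℝ} (hu₀ : u ≠ 0) (hu₁ : 1 - u ≠ 0) :
    a ^ 2 / u + b ^ 2 / (1 - u) =
      (a + b) ^ 2 + ((a + b) * u - a) ^ 2 / (u * (1 - u)) := by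
  field_simp
  ring

lemma neg_sq_sub_half_le_of_mem_saddleWindow (ha : 0 < a) (hb : 0 < b) (hab : 1 ≤ a * b) {u : ℝ}
    (hu : u ∈ saddleWindow a b) :
    -(a + b) ^ 2 - 1 / 2 ≤ -a ^ 2 / u - b ^ 2 / (1 - u) := by
  have hbu := le_one_sub_of_mem_saddleWindow ha hb hab hu
  obtain ⟨hu₀, hu₁⟩ := saddleWindow_subset_Ioo ha hb hab hu
  rw [← sub_pos] at hu₁
  have hdev₀ : 0 ≤ (a + b) * u - a := by
    rw [sub_nonneg, ← div_le_iff₀' (by positivity)]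
    exact hu.1
  have hdev : (a + b) * u - a ≤ √(a * b) / (2 * (a + b)) :=
    calc (a + b) * u - a
        ≤ (a + b) * (a / (a + b) + √(a * b) / (2 * (a + b) ^ 2)) - a := by gcongr; exact hu.2
      _ = √(a * b) / (2 * (a + b)) := by field_simp; ring
  have hexcess : ((a + b) * u - a) ^ 2 / (u * (1 - u)) ≤ 1 / 2 := by
    rw [div_le_iff₀ (by positivity)]
    calc ((a + b) * u - a) ^ 2 ≤ (√(a * b) / (2 * (a + b))) ^ 2 := by gcongr
      _ = 1 / 2 * (a / (a + b) * (b / (a + b) / 2)) := by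
          rw [div_pow, sq_sqrt (by positivity)]
          field_simp
      _ ≤ 1 / 2 * (u * (1 - u)) := by gcongr; exact hu.1
  linarith [sq_div_add_sq_div_one_sub (a := a) (b := b) hu₀.ne' hu₁.ne', neg_div u (a ^ 2)]

lemma exp_mul_saddleTerm_le_Iab_one (hα : 0 < α) (hβ : 0 < β) (ha : 0 < a) (hb : 0 < b)
    (hab : 1 ≤ a * b) :
    (3 / 2) ^ (-α) * exp (-(1 / 2)) / 2 * exp (-(a + b) ^ 2) * saddleTerm α β a b ≤
      Iab α β 1 a b := by
  have hmono : √(a * b) ≤ √(1 + a * b) := by gcongr; linarith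
  calc (3 / 2) ^ (-α) * exp (-(1 / 2)) / 2 * exp (-(a + b) ^ 2) * saddleTerm α β a b
      ≤ (3 / 2) ^ (-α) * exp (-(1 / 2)) / 2 * exp (-(a + b) ^ 2) *
          (((a + b) / a) ^ (α - 1) * ((a + b) / b) ^ (β - 1) / √(a * b)) := by
        unfold saddleTerm
        gcongr
    _ = (3 / 2 * (a / (a + b))) ^ (-α) * (b / (a + b)) ^ (-β) * exp (-(a + b) ^ 2 - 1 / 2) *
          (a / (a + b) + √(a * b) / (2 * (a + b) ^ 2) - a / (a + b)) := by
        rw [← inv_div a, ← inv_div b, inv_rpow_sub_one (by positivity),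
          inv_rpow_sub_one (by positivity), mul_rpow (by norm_num) (by positivity),
          sub_eq_add_neg _ (1 / 2 : ℝ), exp_add, add_sub_cancel_left]
        field_simp
        rw [sq_sqrt (by positivity)]
    _ ≤ Iab α β 1 a b := by
        have hcompl := one_sub_div_add (add_pos ha hb).ne'
        have hsub := saddleWindow_subset_Ioo ha hb hab
        have hlen : a / (a + b) ≤ a / (a + b) + √(a * b) / (2 * (a + b) ^ 2) :=
          le_add_of_nonneg_right (by positivity)
        refine mul_sub_le_Iab hα hβ ha.ne' hb.ne' (by positivity) hlen
          (hsub (Set.right_mem_Icc.2 hlen)).2 fun u hu ↦ ?_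
        obtain ⟨hu₀, hu₁⟩ := hsub hu
        rw [← sub_pos] at hu₁
        gcongr ?_ * ?_ * exp ?_
        · exact rpow_le_rpow_of_nonpos hu₀ (le_of_mem_saddleWindow ha hb hab hu) (by linarith)
        · exact rpow_le_rpow_of_nonpos hu₁ (by linarith [hu.1]) (by linarith)
        · exact neg_sq_sub_half_le_of_mem_saddleWindow ha hb hab hu

lemma rpow_le_two_mul_saddleTerm (hα : 3 / 2 ≤ α) (hβ : 1 ≤ β) (ha : 0 < a) (hb : 0 < b)
    (hab : 1 ≤ a * b) : (1 / a ^ 2) ^ (α - 1) ≤ 2 * saddleTerm α β a b := by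
  have hfactor : ((a + b) / a) ^ (α - 1) = (1 / a ^ 2) ^ (α - 1) * (a * (a + b)) ^ (α - 1) := by
    rw [← mul_rpow (by positivity) (by positivity)]
    congr 1
    field_simp
  have hone : 1 ≤ ((a + b) / b) ^ (β - 1) :=
    one_le_rpow ((one_le_div hb).2 (by linarith)) (by linarith)
  have hsqrt : √(1 + a * b) ≤ 2 * (a * (a + b)) ^ (α - 1) :=
    calc √(1 + a * b) ≤ √(2 ^ 2 * (a * b)) := by gcongr; linarith
      _ = 2 * (a * b) ^ (1 / 2 : ℝ) := by
          rw [sqrt_mul (by positivity), sqrt_sq zero_le_two, ← sqrt_eq_rpow]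
      _ ≤ 2 * (a * b) ^ (α - 1) := by gcongr; linarith
      _ ≤ 2 * (a * (a + b)) ^ (α - 1) := by gcongr <;> linarith
  rw [saddleTerm, ← mul_div_assoc, le_div_iff₀ (by positivity), hfactor]
  calc (1 / a ^ 2) ^ (α - 1) * √(1 + a * b)
      ≤ (1 / a ^ 2) ^ (α - 1) * (2 * (a * (a + b)) ^ (α - 1)) * 1 := by rw [mul_one]; gcongr
    _ ≤ (1 / a ^ 2) ^ (α - 1) * (2 * (a * (a + b)) ^ (α - 1)) * ((a + b) / b) ^ (β - 1) := by
        gcongr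
    _ = 2 * ((1 / a ^ 2) ^ (α - 1) * (a * (a + b)) ^ (α - 1) * ((a + b) / b) ^ (β - 1)) := by
        ring

lemma saddleTerm_le_of_le (hα : 1 ≤ α) (hβ : 1 ≤ β) (ha : 0 < a) (hab : a * b ≤ 1)
    (hle : a ≤ b) :
    saddleTerm α β a b ≤ 2 ^ (α + β - 2) * (1 / a ^ 2) ^ (α - 1) := by
  have hb : 0 < b := ha.trans_le hle
  have hnear : (a + b) / a ≤ 2 * (1 / a ^ 2) := by
    rw [mul_one_div, div_le_div_iff₀ ha (by positivity)]
    nlinarith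
  have hfar : (a + b) / b ≤ 2 := by
    rw [div_le_iff₀ hb]
    linarith
  calc saddleTerm α β a b ≤ ((a + b) / a) ^ (α - 1) * ((a + b) / b) ^ (β - 1) :=
        div_le_self (by positivity) (one_le_sqrt.2 (by nlinarith))
    _ ≤ (2 * (1 / a ^ 2)) ^ (α - 1) * 2 ^ (β - 1) := by gcongr
    _ = 2 ^ (α + β - 2) * (1 / a ^ 2) ^ (α - 1) := by
        rw [mul_rpow zero_le_two (by positivity), mul_right_comm, ← rpow_add two_pos]
        ring_nf

lemma saddleTerm_le_mul_add (hα : 1 ≤ α) (hβ : 1 ≤ β) (ha : 0 < a) (hb : 0 < b)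
    (hab : a * b ≤ 1) :
    saddleTerm α β a b ≤
      2 ^ (α + β - 2) * ((1 / a ^ 2) ^ (α - 1) + (1 / b ^ 2) ^ (β - 1)) := by
  rw [mul_add]
  rcases le_total a b with hle | hle
  · exact (saddleTerm_le_of_le hα hβ ha hab hle).trans (le_add_of_nonneg_right (by positivity))
  · rw [saddleTerm_comm, add_comm α β]
    exact (saddleTerm_le_of_le hβ hα hb (by rwa [mul_comm]) hle).trans
      (le_add_of_nonneg_left (by positivity))

lemma mul_exp_mul_le_Iab_one_of_mul_le_one (hα : 1 ≤ α) (hβ : 1 ≤ β) (ha : 0 < a) (hb : 0 < b)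
    (hab : a * b ≤ 1) :
    exp (-5) / (8 * (1 + 2 ^ (α + β - 2))) * exp (-(a + b) ^ 2) *
      ((1 / a ^ 2) ^ (α - 1) + (1 / b ^ 2) ^ (β - 1) + saddleTerm α β a b) ≤ Iab α β 1 a b := by
  have hleft := exp_mul_rpow_le_Iab_one hα hβ ha hb hab
  have hright := exp_mul_rpow_le_Iab_one hβ hα hb ha (by rwa [mul_comm])
  rw [← Iab_comm, add_comm b a] at hright
  calc exp (-5) / (8 * (1 + 2 ^ (α + β - 2))) * exp (-(a + b) ^ 2) *
        ((1 / a ^ 2) ^ (α - 1) + (1 / b ^ 2) ^ (β - 1) + saddleTerm α β a b)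
      ≤ exp (-5) / (8 * (1 + 2 ^ (α + β - 2))) * exp (-(a + b) ^ 2) *
        ((1 + 2 ^ (α + β - 2)) * ((1 / a ^ 2) ^ (α - 1) + (1 / b ^ 2) ^ (β - 1))) := by
        gcongr
        linarith [saddleTerm_le_mul_add hα hβ ha hb hab]
    _ = (exp (-5) / 4 * exp (-(a + b) ^ 2) * (1 / a ^ 2) ^ (α - 1) +
          exp (-5) / 4 * exp (-(a + b) ^ 2) * (1 / b ^ 2) ^ (β - 1)) / 2 := by
        field_simp
        norm_num
    _ ≤ Iab α β 1 a b := by linarith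

lemma mul_exp_mul_le_Iab_one_of_one_le_mul (hα : 3 / 2 ≤ α) (hβ : 3 / 2 ≤ β) (ha : 0 < a)
    (hb : 0 < b) (hab : 1 ≤ a * b) :
    (3 / 2) ^ (-α) * exp (-(1 / 2)) / 10 * exp (-(a + b) ^ 2) *
      ((1 / a ^ 2) ^ (α - 1) + (1 / b ^ 2) ^ (β - 1) + saddleTerm α β a b) ≤ Iab α β 1 a b := by
  have hleft : (1 / a ^ 2) ^ (α - 1) ≤ 2 * saddleTerm α β a b :=
    rpow_le_two_mul_saddleTerm hα (by linarith) ha hb hab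
  have hright : (1 / b ^ 2) ^ (β - 1) ≤ 2 * saddleTerm α β a b := by
    rw [saddleTerm_comm]
    exact rpow_le_two_mul_saddleTerm hβ (by linarith) hb ha (by rwa [mul_comm])
  calc (3 / 2) ^ (-α) * exp (-(1 / 2)) / 10 * exp (-(a + b) ^ 2) *
        ((1 / a ^ 2) ^ (α - 1) + (1 / b ^ 2) ^ (β - 1) + saddleTerm α β a b)
      ≤ (3 / 2) ^ (-α) * exp (-(1 / 2)) / 10 * exp (-(a + b) ^ 2) *
        (5 * saddleTerm α β a b) := by
        gcongr
        linarith
    _ = (3 / 2) ^ (-α) * exp (-(1 / 2)) / 2 * exp (-(a + b) ^ 2) * saddleTerm α β a b := by ring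
    _ ≤ Iab α β 1 a b :=
        exp_mul_saddleTerm_le_Iab_one (by linarith) (by linarith) ha hb hab

lemma exists_mul_le_Iab_one (hα : 3 / 2 ≤ α) (hβ : 3 / 2 ≤ β) :
    ∃ c : ℝ, 0 < c ∧ ∀ a b : ℝ, 0 < a → 0 < b →
      c * exp (-(a + b) ^ 2) *
        ((1 / a ^ 2) ^ (α - 1) + (1 / b ^ 2) ^ (β - 1) + saddleTerm α β a b) ≤
      Iab α β 1 a b := by
  refine ⟨min (exp (-5) / (8 * (1 + 2 ^ (α + β - 2)))) ((3 / 2) ^ (-α) * exp (-(1 / 2)) / 10),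
    by positivity, fun a b ha hb ↦ ?_⟩
  have hT : 0 < saddleTerm α β a b := saddleTerm_pos ha hb
  rcases le_total (a * b) 1 with hab | hab
  · refine le_trans ?_
      (mul_exp_mul_le_Iab_one_of_mul_le_one (by linarith) (by linarith) ha hb hab)
    gcongr
    exact min_le_left _ _
  · refine le_trans ?_ (mul_exp_mul_le_Iab_one_of_one_le_mul hα hβ ha hb hab)
    gcongr
    exact min_le_right _ _

end

theorem stmt4_general (α β : ℝ) (hα : 3 / 2 ≤ α) (hβ : 3 / 2 ≤ β) :
    ∃ c : ℝ, 0 < c ∧ ∀ a b t : ℝ, 0 < a → 0 < b → 0 < t →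
      c * exp (-(a + b) ^ 2 / t) *
        (((t / a ^ 2) ^ (α - 1) + (t / b ^ 2) ^ (β - 1)) / t ^ (α + β - 1) +
          ((a + b) ^ (α + β - 2) / t ^ (α + β - 1)) *
            (√t / (a ^ (α - 1) * b ^ (β - 1) * √(t + a * b))))
      ≤ Iab α β t a b := by
  obtain ⟨c, hc, hunit⟩ := exists_mul_le_Iab_one hα hβ
  refine ⟨c, hc, fun a b t ha hb ht ↦ ?_⟩
  have hscale := hunit (a / √t) (b / √t) (by positivity) (by positivity)
  rw [saddleTerm_div_sqrt ha hb ht, ← add_div, div_pow, div_pow, div_pow, sq_sqrt ht.le, ← neg_div,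
    one_div_div, one_div_div] at hscale
  have hpow : t ^ (1 - α - β) = (t ^ (α + β - 1))⁻¹ := by
    rw [← rpow_neg ht.le]
    ring_nf
  rw [Iab_eq_rpow_mul_Iab_one ht, hpow]
  refine le_trans (le_of_eq ?_) (mul_le_mul_of_nonneg_left hscale (by positivity))
  ring

/-- For fixed `α, β > 3/2` there is a constant `c > 0` depending only on `α, β` such that
for all `a, b, t > 0`:
`I_{α,β}(t,a,b) ≥ c exp(−(a+b)²/t) (((t/a²)^{α−1} + (t/b²)^{β−1})/t^{α+β−1}`
`+ ((a+b)^{α+β−2}/t^{α+β−1}) √t/(a^{α−1} b^{β−1} √(t+ab)))`. -/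
theorem stmt4 (α β : ℝ) (hα : 3 / 2 < α) (hβ : 3 / 2 < β) :
    ∃ c : ℝ, 0 < c ∧ ∀ a b t : ℝ, 0 < a → 0 < b → 0 < t →
      c * Real.exp (-(a + b) ^ 2 / t) *
        (((t / a ^ 2) ^ (α - 1) + (t / b ^ 2) ^ (β - 1)) / t ^ (α + β - 1) +
          ((a + b) ^ (α + β - 2) / t ^ (α + β - 1)) *
            (Real.sqrt t / (a ^ (α - 1) * b ^ (β - 1) * Real.sqrt (t + a * b))))
      ≤ Iab α β t a b :=
  stmt4_general α β hα.le hβ.le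
end

section
/- For all real α, β > 1 and all a, b, t > 0 the following identity holds: I_{α,β}(t,a,b) = exp(−(a+b)²/t) · ((a+b)/t)^{α+β−1} · ( a^{1−α−β} · J_{α,β}(t,a,b) + b^{1−α−β} · J_{β,α}(t,b,a) ). -/
open MeasureTheory Real

/-- `J_{α,β}(t,a,b) = ∫₀¹ (1−u)^(−α) (u+b/a)^(−β) exp(−(a+b)²u²/((1−u)t(u+b/a))) du`. -/
noncomputable def Jab (α β t a b : ℝ) : ℝ :=
  ∫ u in Set.Ioo (0 : ℝ) 1,
    (1 - u) ^ (-α) * (u + b / a) ^ (-β) *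
      Real.exp (-((a + b) ^ 2 * u ^ 2) / ((1 - u) * t * (u + b / a)))

/-!
The function `a² / s + b² / (t - s)` attains its minimum `(a + b)² / t` over `(0, t)` at
`s₀ = t a / (a + b)`, and exceeds it by `(a (t - s) - b s)² / (t s (t - s))`. Cut the integral
`I` at `s₀`. On `(0, s₀)` the affine substitution `s = s₀ (1 - u)` gives
`t - s = s₀ (u + b / a)`, so that this half is a multiple of `J_{α,β}(t,a,b)`. The reflection
`s ↦ t - s` exchanges `(α, a)` and `(β, b)` and reduces the other half to the first one. The
exponential factors make the integrand vanish at both ends of `(0, t)`, whatever the exponents.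
-/

section General

open Filter Set
open scoped Topology

theorem sq_div_add_sq_div_eq_add_sq_div_add {K : Type*} [Field K] (a b : K) {x y : K}
    (hx : x ≠ 0) (hy : y ≠ 0) (hxy : x + y ≠ 0) :
    a ^ 2 / x + b ^ 2 / y =
      (a + b) ^ 2 / (x + y) + (a * y - b * x) ^ 2 / ((x + y) * (x * y)) := by
  field_simp
  ring

theorem tendsto_rpow_mul_exp_neg_div_nhdsGT_zero (p : ℝ) {c : ℝ} (hc : 0 < c) :
    Tendsto (fun s : ℝ ↦ s ^ p * exp (-c / s)) (𝓝[>] 0) (𝓝 0) := by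
  refine ((tendsto_rpow_mul_exp_neg_mul_atTop_nhds_zero (-p) c hc).comp
    tendsto_inv_nhdsGT_zero).congr' ?_
  filter_upwards [self_mem_nhdsWithin] with s (hs : 0 < s)
  rw [Function.comp_apply, inv_rpow hs.le, rpow_neg hs.le, inv_inv, ← div_eq_mul_inv]

theorem intervalIntegrable_of_continuousOn_Ioo_of_tendsto {E : Type*} [NormedAddCommGroup E]
    {μ : Measure ℝ} [IsLocallyFiniteMeasure μ] [NullSingletonClass μ] {f : ℝ → E} {x y : ℝ}
    {l m : E} (hxy : x ≤ y) (hf : ContinuousOn f (Ioo x y))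
    (hl : Tendsto f (𝓝[>] x) (𝓝 l)) (hm : Tendsto f (𝓝[<] y) (𝓝 m)) :
    IntervalIntegrable f μ x y := by
  have hext : IntegrableOn (extendFrom (Ioo x y) f) (Ioo x y) μ :=
    (continuousOn_Icc_extendFrom_Ioo hf hl hm).integrableOn_Icc.mono_set Ioo_subset_Icc_self
  rw [intervalIntegrable_iff_integrableOn_Ioo_of_le hxy]
  refine hext.congr_fun (fun s hs ↦ ?_) measurableSet_Ioo
  exact extendFrom_eq (subset_closure hs) (hf s hs)

end General

namespace Iab

open Filter Set
open scoped Topology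

/-- The integrand of `Iab`, named so that it can be reflected and integrated over subintervals. -/
noncomputable def integrand (α β t a b s : ℝ) : ℝ :=
  s ^ (-α) * (t - s) ^ (-β) * exp (-a ^ 2 / s - b ^ 2 / (t - s))

/-- The point of `(0, t)` at which `a ^ 2 / s + b ^ 2 / (t - s)` is minimal, for positive `a`, `b`
and `t`; the integral `Iab` is cut there. -/
noncomputable def saddlePoint (t a b : ℝ) : ℝ :=
  t * a / (a + b)

variable {α β t a b : ℝ}

theorem integrand_eq_mul (α β t a b s : ℝ) :
    integrand α β t a b s =
      s ^ (-α) * exp (-a ^ 2 / s) * ((t - s) ^ (-β) * exp (-b ^ 2 / (t - s))) := by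
  rw [integrand, sub_eq_add_neg (-a ^ 2 / s), exp_add, ← neg_div]
  ring

theorem integrand_sub_left (α β t a b s : ℝ) :
    integrand α β t a b (t - s) = integrand β α t b a s := by
  rw [integrand_eq_mul, integrand_eq_mul, sub_sub_cancel, mul_comm]

theorem continuousOn_integrand (α β t a b : ℝ) :
    ContinuousOn (integrand α β t a b) (Ioo 0 t) := by
  have hs : ∀ s ∈ Ioo 0 t, s ≠ 0 := fun s hs ↦ hs.1.ne'
  have hts : ∀ s ∈ Ioo 0 t, t - s ≠ 0 := fun s hs ↦ (sub_pos.2 hs.2).ne'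
  unfold integrand
  fun_prop (disch := grind)

theorem tendsto_integrand_nhdsGT_zero (α β b : ℝ) (ht : t ≠ 0) (ha : a ≠ 0) :
    Tendsto (integrand α β t a b) (𝓝[>] 0) (𝓝 0) := by
  have hright : ContinuousAt (fun s ↦ (t - s) ^ (-β) * exp (-b ^ 2 / (t - s))) 0 := by
    have ht' : t - 0 ≠ 0 := by rwa [sub_zero]
    fun_prop (disch := grind)
  have hleft := tendsto_rpow_mul_exp_neg_div_nhdsGT_zero (-α) (sq_pos_of_ne_zero ha)
  simpa only [← integrand_eq_mul, zero_mul] using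
    hleft.mul (hright.tendsto.mono_left nhdsWithin_le_nhds)

theorem tendsto_integrand_nhdsLT (α β a : ℝ) (ht : t ≠ 0) (hb : b ≠ 0) :
    Tendsto (integrand α β t a b) (𝓝[<] t) (𝓝 0) := by
  have hreflect : Tendsto (fun s ↦ t - s) (𝓝[<] t) (𝓝[>] 0) := by
    refine tendsto_nhdsWithin_iff.2 ⟨?_, ?_⟩
    · exact (Continuous.tendsto' (by fun_prop) t 0 (sub_self t)).mono_left nhdsWithin_le_nhds
    · filter_upwards [self_mem_nhdsWithin] with s (hs : s < t) using sub_pos.2 hs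
  simpa only [Function.comp_def, integrand_sub_left] using
    (tendsto_integrand_nhdsGT_zero β α a ht hb).comp hreflect

theorem intervalIntegrable_integrand (α β : ℝ) (ht : 0 < t) (ha : a ≠ 0) (hb : b ≠ 0) :
    IntervalIntegrable (integrand α β t a b) volume 0 t :=
  intervalIntegrable_of_continuousOn_Ioo_of_tendsto ht.le (continuousOn_integrand α β t a b)
    (tendsto_integrand_nhdsGT_zero α β b ht.ne' ha) (tendsto_integrand_nhdsLT α β a ht.ne' hb)

theorem saddlePoint_pos (ht : 0 < t) (ha : 0 < a) (hb : 0 ≤ b) : 0 < saddlePoint t a b := by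
  unfold saddlePoint
  positivity

theorem saddlePoint_add_saddlePoint_swap (t : ℝ) (hab : a + b ≠ 0) :
    saddlePoint t a b + saddlePoint t b a = t := by
  rw [saddlePoint, saddlePoint, add_comm b a]
  field_simp

theorem saddlePoint_rpow (p : ℝ) (ht : 0 ≤ t) (ha : 0 ≤ a) (hb : 0 ≤ b) :
    saddlePoint t a b ^ p = ((a + b) / t) ^ (-p) * a ^ p := by
  have hsplit : saddlePoint t a b = ((a + b) / t)⁻¹ * a := by
    rw [saddlePoint, inv_div, div_mul_eq_mul_div]
  rw [hsplit, mul_rpow (by positivity) ha, inv_rpow (by positivity), rpow_neg (by positivity)]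

theorem sub_saddlePoint_mul (t u : ℝ) (ha : a ≠ 0) (hab : a + b ≠ 0) :
    t - saddlePoint t a b * (1 - u) = saddlePoint t a b * (u + b / a) := by
  unfold saddlePoint
  field_simp
  ring

theorem exponent_saddlePoint_mul {u : ℝ} (ht : 0 < t) (ha : 0 < a) (hb : 0 ≤ b)
    (hu : u ∈ Ioo 0 1) :
    -a ^ 2 / (saddlePoint t a b * (1 - u)) - b ^ 2 / (saddlePoint t a b * (u + b / a)) =
      -(a + b) ^ 2 / t + -((a + b) ^ 2 * u ^ 2) / ((1 - u) * t * (u + b / a)) := by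
  have hc : saddlePoint t a b ≠ 0 := (saddlePoint_pos ht ha hb).ne'
  have hu₁ : 1 - u ≠ 0 := (sub_pos.2 hu.2).ne'
  have hv : u + b / a ≠ 0 := (add_pos_of_pos_of_nonneg hu.1 (by positivity)).ne'
  have hsum : saddlePoint t a b * (1 - u) + saddlePoint t a b * (u + b / a) = t := by
    rw [← sub_saddlePoint_mul t u ha.ne' (by positivity), add_sub_cancel]
  have hdefect : a * (saddlePoint t a b * (u + b / a)) - b * (saddlePoint t a b * (1 - u)) =
      saddlePoint t a b * ((a + b) * u) := by
    field_simp
    ring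
  have hmin := sq_div_add_sq_div_eq_add_sq_div_add a b (mul_ne_zero hc hu₁) (mul_ne_zero hc hv)
    (hsum.trans_ne ht.ne')
  rw [hsum, hdefect] at hmin
  have hcancel : (saddlePoint t a b * ((a + b) * u)) ^ 2 /
      (t * (saddlePoint t a b * (1 - u) * (saddlePoint t a b * (u + b / a)))) =
      (a + b) ^ 2 * u ^ 2 / ((1 - u) * t * (u + b / a)) := by
    generalize u + b / a = v at hv ⊢
    field_simp
  rw [hcancel] at hmin
  linear_combination -hmin

theorem integrand_saddlePoint_mul {u : ℝ} (α β : ℝ) (ht : 0 < t) (ha : 0 < a) (hb : 0 ≤ b)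
    (hu : u ∈ Ioo 0 1) :
    integrand α β t a b (saddlePoint t a b * (1 - u)) =
      exp (-(a + b) ^ 2 / t) * saddlePoint t a b ^ (-α - β) *
        ((1 - u) ^ (-α) * (u + b / a) ^ (-β) *
          exp (-((a + b) ^ 2 * u ^ 2) / ((1 - u) * t * (u + b / a)))) := by
  have hc : 0 < saddlePoint t a b := saddlePoint_pos ht ha hb
  have hu₁ : 0 ≤ 1 - u := sub_nonneg.2 hu.2.le
  have hv : 0 ≤ u + b / a := add_nonneg hu.1.le (by positivity)
  rw [integrand, sub_saddlePoint_mul t u ha.ne' (by positivity),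
    exponent_saddlePoint_mul ht ha hb hu, exp_add, mul_rpow hc.le hu₁, mul_rpow hc.le hv,
    sub_eq_add_neg (-α), rpow_add hc]
  ring

theorem integral_integrand_zero_saddlePoint (α β : ℝ) (ht : 0 < t) (ha : 0 < a) (hb : 0 ≤ b) :
    ∫ s in 0..saddlePoint t a b, integrand α β t a b s =
      exp (-(a + b) ^ 2 / t) * ((a + b) / t) ^ (α + β - 1) *
        (a ^ (1 - α - β) * Jab α β t a b) := by
  set c := saddlePoint t a b with hc
  have hc₀ : 0 < c := saddlePoint_pos ht ha hb
  have hpow : c * c ^ (-α - β) = ((a + b) / t) ^ (α + β - 1) * a ^ (1 - α - β) := by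
    calc c * c ^ (-α - β) = c ^ (1 - α - β) := by
          rw [sub_eq_add_neg 1 α, add_sub_assoc, rpow_add hc₀, rpow_one]
      _ = _ := by
          rw [hc, saddlePoint_rpow _ ht.le ha.le hb]
          ring_nf
  calc ∫ s in 0..c, integrand α β t a b s
      = c * ∫ u in (0 : ℝ)..1, integrand α β t a b (c * (1 - u)) := by
        simp [mul_sub, intervalIntegral.mul_integral_comp_sub_mul]
    _ = c * (exp (-(a + b) ^ 2 / t) * c ^ (-α - β) * Jab α β t a b) := by
        rw [intervalIntegral.integral_of_le zero_le_one, integral_Ioc_eq_integral_Ioo,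
          setIntegral_congr_fun measurableSet_Ioo
            fun u hu ↦ integrand_saddlePoint_mul α β ht ha hb hu,
          integral_const_mul, Jab]
    _ = exp (-(a + b) ^ 2 / t) * (c * c ^ (-α - β)) * Jab α β t a b := by ring
    _ = _ := by rw [hpow]; ring

theorem integral_integrand_from_saddlePoint (α β t : ℝ) (hab : a + b ≠ 0) :
    ∫ s in saddlePoint t a b..t, integrand α β t a b s =
      ∫ s in 0..saddlePoint t b a, integrand β α t b a s := by
  simp_rw [← integrand_sub_left α β t a b]
  rw [intervalIntegral.integral_comp_sub_left, sub_zero,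
    ← eq_sub_of_add_eq (saddlePoint_add_saddlePoint_swap t hab)]

theorem eq_integral_add_integral (α β : ℝ) (ht : 0 < t) (ha : 0 < a) (hb : 0 < b) :
    Iab α β t a b =
      (∫ s in 0..saddlePoint t a b, integrand α β t a b s) +
        ∫ s in 0..saddlePoint t b a, integrand β α t b a s := by
  have hint := intervalIntegrable_integrand α β ht ha.ne' hb.ne'
  have hmem : saddlePoint t a b ∈ uIcc 0 t := by
    have hsum := saddlePoint_add_saddlePoint_swap t (add_pos ha hb).ne'
    rw [uIcc_of_le ht.le]
    constructor <;> linarith [saddlePoint_pos ht ha hb.le, saddlePoint_pos ht hb ha.le]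
  rw [← integral_integrand_from_saddlePoint α β t (add_pos ha hb).ne',
    intervalIntegral.integral_add_adjacent_intervals
      (hint.mono_set (uIcc_subset_uIcc_left hmem)) (hint.mono_set (uIcc_subset_uIcc_right hmem)),
    intervalIntegral.integral_of_le ht.le, integral_Ioc_eq_integral_Ioo]
  rfl

end Iab

theorem stmt5_general (α β : ℝ) {a b t : ℝ} (ha : 0 < a) (hb : 0 < b) (ht : 0 < t) :
    Iab α β t a b = exp (-(a + b) ^ 2 / t) * ((a + b) / t) ^ (α + β - 1) *
      (a ^ (1 - α - β) * Jab α β t a b + b ^ (1 - α - β) * Jab β α t b a) := by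
  rw [Iab.eq_integral_add_integral α β ht ha hb,
    Iab.integral_integrand_zero_saddlePoint α β ht ha hb.le,
    Iab.integral_integrand_zero_saddlePoint β α ht hb ha.le,
    add_comm b a, add_comm β α, sub_right_comm 1 β α, ← mul_add]

/-- For all `α, β > 1` and all `a, b, t > 0`:
`I_{α,β}(t,a,b) = exp(−(a+b)²/t) ((a+b)/t)^{α+β−1}`
`(a^{1−α−β} J_{α,β}(t,a,b) + b^{1−α−β} J_{β,α}(t,b,a))`. -/
theorem stmt5 (α β : ℝ) (hα : 1 < α) (hβ : 1 < β)
    (a b t : ℝ) (ha : 0 < a) (hb : 0 < b) (ht : 0 < t) :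
    Iab α β t a b = Real.exp (-(a + b) ^ 2 / t) * ((a + b) / t) ^ (α + β - 1) *
      (a ^ (1 - α - β) * Jab α β t a b + b ^ (1 - α - β) * Jab β α t b a) :=
  stmt5_general α β ha hb ht
end

section
/- Fix real numbers α, β > 3/2. There exist constants c, C > 0 depending only on α and β such that for all a, b, t > 0: c · (a/b)^{β−1} · (a/(a+b)) · √(t/(ab + t)) ≤ ∫₀^{1/2} (1−u)^(−α) (u + b/a)^(−β) exp(−(a+b)² u² / ((1−u) t (u + b/a))) du ≤ C · (a/b)^{β−1} · (a/(a+b)) · √(t/(ab + t)). -/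
open MeasureTheory Real

/-!
Write `r = b/a` and `l = (a+b)²/t`. On `[0, 1/2]` the powers of `1 - u` are comparable to `1`, so
the integral is comparable to `I(l) = ∫₀^{1/2} (u+r)^(-β) exp(-l u²/(u+r)) du`, and the claim
becomes `I(l) ≍ r^(1-β) / √((1+r)² + l r)`.

*Upper bound.* Dropping the exponential gives `(1+r) I(l) ≲ r^(1-β)`; integrating `(u+r)^(-β)`
down to `u = 0` costs the constant `1/(β-1)`. Since `(u/√(u+r))' ≥ (1/2) (u+r)^(-1/2)` and
`exp(-x²) ≤ 1/(1+x²)`, a multiple of `arctan (√l u/√(u+r))` is a primitive of a majorant, which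
gives `√(l r) I(l) ≲ r^(1-β)`. Add the two bounds.

*Lower bound.* On `[0, δ]` with `δ = r / (2 √((1+r)² + l r))` one has `δ ≤ min (1/2) r` and
`l δ² ≤ r`, so the integrand is at least a constant times `r^(-β)` there.
-/

lemma rpow_le_rpow_abs_mul_rpow {x y K : ℝ} (p : ℝ) (hx : 0 < x) (hy : 0 < y)
    (hxy : x ≤ K * y) (hyx : y ≤ K * x) : x ^ p ≤ K ^ |p| * y ^ p := by
  have hK : 0 < K := pos_of_mul_pos_left (hx.trans_le hxy) hy.le
  rcases le_total 0 p with hp | hp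
  · rw [abs_of_nonneg hp, ← mul_rpow hK.le hy.le]
    exact rpow_le_rpow hx.le hxy hp
  · calc x ^ p ≤ (K⁻¹ * y) ^ p :=
          rpow_le_rpow_of_nonpos (by positivity) ((inv_mul_le_iff₀ hK).2 hyx) hp
      _ = K ^ |p| * y ^ p := by
          rw [mul_rpow (by positivity) hy.le, abs_of_nonpos hp, rpow_neg_eq_inv_rpow]

lemma exp_neg_le_inv_one_add {x : ℝ} (hx : 0 ≤ x) : exp (-x) ≤ (1 + x)⁻¹ := by
  rw [exp_neg]
  exact inv_anti₀ (by positivity) (by linarith [add_one_le_exp x])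

section PowerIntegral

variable {β r T : ℝ}

lemma continuousOn_add_rpow (p : ℝ) (hr : 0 < r) :
    ContinuousOn (fun u : ℝ ↦ (u + r) ^ p) (Set.Icc 0 T) :=
  ContinuousOn.rpow_const (by fun_prop) fun u hu ↦ Or.inl (by linarith [hu.1])

lemma integral_add_rpow_neg_le (hβ : 1 < β) (hr : 0 < r) (hT : 0 ≤ T) :
    ∫ u in (0 : ℝ)..T, (u + r) ^ (-β) ≤ r ^ (1 - β) / (β - 1) := by
  have hzero : (0 : ℝ) ∉ Set.uIcc (0 + r) (T + r) := by
    rw [Set.uIcc_of_le (by linarith)]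
    exact fun h ↦ by linarith [h.1]
  have hend : 0 ≤ (T + r) ^ (1 - β) := by positivity
  calc ∫ u in (0 : ℝ)..T, (u + r) ^ (-β)
      = (r ^ (1 - β) - (T + r) ^ (1 - β)) / (β - 1) := by
        rw [intervalIntegral.integral_comp_add_right (fun x ↦ x ^ (-β)),
          integral_rpow (Or.inr ⟨by linarith, hzero⟩), zero_add, neg_add_eq_sub,
          ← neg_sub β 1, div_neg, ← neg_div, neg_sub]
    _ ≤ r ^ (1 - β) / (β - 1) := by
        gcongr
        linarith

lemma one_add_mul_integral_add_rpow_neg_le (hβ : 1 < β) (hr : 0 < r) (hT : 0 ≤ T) :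
    (1 + r) * ∫ u in (0 : ℝ)..T, (u + r) ^ (-β) ≤ (1 / (β - 1) + T) * r ^ (1 - β) := by
  have hsup : ∫ u in (0 : ℝ)..T, (u + r) ^ (-β) ≤ T * r ^ (-β) := by
    calc ∫ u in (0 : ℝ)..T, (u + r) ^ (-β) ≤ ∫ _ in (0 : ℝ)..T, r ^ (-β) :=
          intervalIntegral.integral_mono_on hT
            ((continuousOn_add_rpow _ hr).intervalIntegrable_of_Icc hT) intervalIntegrable_const
            fun u hu ↦ rpow_le_rpow_of_nonpos hr (by linarith [hu.1]) (by linarith)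
      _ = T * r ^ (-β) := by simp
  calc (1 + r) * ∫ u in (0 : ℝ)..T, (u + r) ^ (-β)
      = (∫ u in (0 : ℝ)..T, (u + r) ^ (-β)) + r * ∫ u in (0 : ℝ)..T, (u + r) ^ (-β) := by ring
    _ ≤ r ^ (1 - β) / (β - 1) + r * (T * r ^ (-β)) := by
        gcongr
        exact integral_add_rpow_neg_le hβ hr hT
    _ = (1 / (β - 1) + T) * r ^ (1 - β) := by
        rw [sub_eq_neg_add 1 β, rpow_add_one hr.ne']
        ring

end PowerIntegral

section DivSqrt

variable {r u : ℝ}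

lemma hasDerivAt_div_sqrt_add (hur : 0 < u + r) :
    HasDerivAt (fun v ↦ v / √(v + r)) ((u + 2 * r) / (2 * √(u + r) ^ 3)) u := by
  have hsqrt : 0 < √(u + r) := sqrt_pos.2 hur
  have hsq : √(u + r) ^ 2 = u + r := sq_sqrt hur.le
  refine ((hasDerivAt_id u).div (((hasDerivAt_id u).add_const r).sqrt hur.ne')
    hsqrt.ne').congr_deriv ?_
  simp only [id_eq]
  field_simp
  linear_combination 2 * hsq

lemma inv_sqrt_le_two_mul_deriv_div_sqrt_add (hr : 0 ≤ r) (hur : 0 < u + r) :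
    (√(u + r))⁻¹ ≤ 2 * ((u + 2 * r) / (2 * √(u + r) ^ 3)) := by
  have hsq : √(u + r) ^ 2 = u + r := sq_sqrt hur.le
  calc (√(u + r))⁻¹ = (u + r) / √(u + r) ^ 3 := by
        field_simp
        exact hsq
    _ ≤ (u + 2 * r) / √(u + r) ^ 3 := by
        gcongr
        linarith
    _ = 2 * ((u + 2 * r) / (2 * √(u + r) ^ 3)) := by ring

end DivSqrt

/-- The integrand of `J⁽¹⁾` with every factor `1 - u` replaced by `1`. The parameters stand for
`r = b / a` and `l = (a + b)² / t`. -/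
noncomputable def reducedIntegrand (β r l u : ℝ) : ℝ :=
  (u + r) ^ (-β) * exp (-(l * (u ^ 2 / (u + r))))

section ReducedIntegrand

variable {β r l u T : ℝ}

lemma reducedIntegrand_nonneg (hur : 0 ≤ u + r) : 0 ≤ reducedIntegrand β r l u := by
  unfold reducedIntegrand
  positivity

lemma reducedIntegrand_antitone (hur : 0 ≤ u + r) :
    Antitone fun l ↦ reducedIntegrand β r l u := by
  intro l l' hl
  dsimp only [reducedIntegrand]
  gcongr

lemma reducedIntegrand_le_rpow (hl : 0 ≤ l) (hur : 0 ≤ u + r) :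
    reducedIntegrand β r l u ≤ (u + r) ^ (-β) :=
  mul_le_of_le_one_right (by positivity) (exp_le_one_iff.2 (neg_nonpos.2 (by positivity)))

lemma continuousOn_reducedIntegrand_comp {f : ℝ → ℝ} (hr : 0 < r)
    (hf : ContinuousOn f (Set.Icc 0 T)) :
    ContinuousOn (fun u ↦ reducedIntegrand β r (f u) u) (Set.Icc 0 T) := by
  have hne : ∀ u ∈ Set.Icc 0 T, u + r ≠ 0 := fun u hu ↦ by linarith [hu.1]
  exact (continuousOn_add_rpow (-β) hr).mul
    (hf.mul (ContinuousOn.div (by fun_prop) (by fun_prop) hne)).neg.rexp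

lemma intervalIntegrable_reducedIntegrand (hr : 0 < r) (hT : 0 ≤ T) :
    IntervalIntegrable (reducedIntegrand β r l) volume 0 T :=
  (continuousOn_reducedIntegrand_comp hr continuousOn_const).intervalIntegrable_of_Icc hT

lemma one_add_mul_integral_reducedIntegrand_le (hβ : 1 < β) (hr : 0 < r) (hl : 0 ≤ l)
    (hT : 0 ≤ T) :
    (1 + r) * ∫ u in (0 : ℝ)..T, reducedIntegrand β r l u ≤
      (1 / (β - 1) + T) * r ^ (1 - β) := by
  refine le_trans ?_ (one_add_mul_integral_add_rpow_neg_le hβ hr hT)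
  gcongr
  exact intervalIntegral.integral_mono_on hT (intervalIntegrable_reducedIntegrand hr hT)
    ((continuousOn_add_rpow _ hr).intervalIntegrable_of_Icc hT)
    fun u hu ↦ reducedIntegrand_le_rpow hl (by linarith [hu.1])

lemma rpow_neg_le_mul_inv_sqrt_add (hβ : 1 / 2 ≤ β) (hr : 0 < r) (hu : 0 ≤ u) :
    (u + r) ^ (-β) ≤ r ^ (1 / 2 - β) * (√(u + r))⁻¹ := by
  have hur : 0 < u + r := by linarith
  calc (u + r) ^ (-β) = (u + r) ^ (1 / 2 - β) * (√(u + r))⁻¹ := by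
        rw [sqrt_eq_rpow, ← rpow_neg hur.le, ← rpow_add hur]
        ring_nf
    _ ≤ r ^ (1 / 2 - β) * (√(u + r))⁻¹ := by
        gcongr ?_ * _
        exact rpow_le_rpow_of_nonpos hr (by linarith) (by linarith)

lemma sqrt_mul_reducedIntegrand_le_deriv_arctan (hβ : 1 / 2 ≤ β) (hr : 0 < r) (hl : 0 ≤ l)
    (hu : 0 ≤ u) :
    √l * reducedIntegrand β r l u ≤ 2 * r ^ (1 / 2 - β) *
      (1 / (1 + (√l * (u / √(u + r))) ^ 2) * (√l * ((u + 2 * r) / (2 * √(u + r) ^ 3)))) := by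
  have hur : 0 < u + r := by linarith
  have hsq : l * (u ^ 2 / (u + r)) = (√l * (u / √(u + r))) ^ 2 := by
    rw [mul_pow, div_pow, sq_sqrt hl, sq_sqrt hur.le]
  calc √l * reducedIntegrand β r l u
      ≤ √l * (r ^ (1 / 2 - β) * (2 * ((u + 2 * r) / (2 * √(u + r) ^ 3))) *
          (1 + (√l * (u / √(u + r))) ^ 2)⁻¹) := by
        rw [reducedIntegrand, hsq]
        gcongr
        · exact (rpow_neg_le_mul_inv_sqrt_add hβ hr hu).trans
            (by gcongr; exact inv_sqrt_le_two_mul_deriv_div_sqrt_add hr.le hur)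
        · exact exp_neg_le_inv_one_add (sq_nonneg _)
    _ = _ := by ring

lemma sqrt_mul_integral_reducedIntegrand_le (hβ : 1 / 2 ≤ β) (hr : 0 < r) (hl : 0 ≤ l)
    (hT : 0 ≤ T) :
    √(l * r) * ∫ u in (0 : ℝ)..T, reducedIntegrand β r l u ≤ π * r ^ (1 - β) := by
  have hderiv : ∀ u ∈ Set.Icc 0 T, HasDerivAt
      (fun v ↦ 2 * r ^ (1 / 2 - β) * arctan (√l * (v / √(v + r))))
      (2 * r ^ (1 / 2 - β) * (1 / (1 + (√l * (u / √(u + r))) ^ 2) *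
        (√l * ((u + 2 * r) / (2 * √(u + r) ^ 3))))) u := fun u hu ↦
    ((hasDerivAt_div_sqrt_add (by linarith [hu.1])).const_mul _).arctan.const_mul _
  have hprimitive := intervalIntegral.integral_le_sub_of_hasDeriv_right_of_le
    (φ := fun u ↦ √l * reducedIntegrand β r l u) hT
    (fun u hu ↦ (hderiv u hu).continuousAt.continuousWithinAt)
    (fun u hu ↦ (hderiv u (Set.Ioo_subset_Icc_self hu)).hasDerivWithinAt)
    ((continuousOn_const.mul (continuousOn_reducedIntegrand_comp hr
      continuousOn_const)).integrableOn_Icc)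
    (fun u hu ↦ sqrt_mul_reducedIntegrand_le_deriv_arctan hβ hr hl hu.1.le)
  simp only [intervalIntegral.integral_const_mul, zero_div, mul_zero, arctan_zero,
    sub_zero] at hprimitive
  calc √(l * r) * ∫ u in (0 : ℝ)..T, reducedIntegrand β r l u
      = √r * (√l * ∫ u in (0 : ℝ)..T, reducedIntegrand β r l u) := by
        rw [sqrt_mul hl]
        ring
    _ ≤ √r * (2 * r ^ (1 / 2 - β) * arctan (√l * (T / √(T + r)))) := by gcongr
    _ ≤ √r * (2 * r ^ (1 / 2 - β) * (π / 2)) := by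
        gcongr
        exact (arctan_lt_pi_div_two _).le
    _ = π * r ^ (1 - β) := by
        rw [show 1 - β = 1 / 2 + (1 / 2 - β) by ring, rpow_add hr, sqrt_eq_rpow]
        ring

lemma integral_reducedIntegrand_le (hβ : 1 < β) (hr : 0 < r) (hl : 0 ≤ l) (hT : 0 ≤ T) :
    ∫ u in (0 : ℝ)..T, reducedIntegrand β r l u ≤
      (1 / (β - 1) + T + π) * (r ^ (1 - β) / √((1 + r) ^ 2 + l * r)) := by
  have hnonneg : 0 ≤ ∫ u in (0 : ℝ)..T, reducedIntegrand β r l u :=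
    intervalIntegral.integral_nonneg hT fun u hu ↦
      reducedIntegrand_nonneg (by linarith [hu.1])
  have hsqrt : √((1 + r) ^ 2 + l * r) ≤ (1 + r) + √(l * r) := by
    refine sqrt_le_iff.2 ⟨by positivity, ?_⟩
    nlinarith [sq_sqrt (mul_nonneg hl hr.le), sqrt_nonneg (l * r)]
  have hpos : 0 < √((1 + r) ^ 2 + l * r) := by positivity
  rw [← mul_div_assoc, le_div_iff₀ hpos, mul_comm]
  calc √((1 + r) ^ 2 + l * r) * ∫ u in (0 : ℝ)..T, reducedIntegrand β r l u
      ≤ ((1 + r) + √(l * r)) * ∫ u in (0 : ℝ)..T, reducedIntegrand β r l u := by gcongr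
    _ ≤ (1 / (β - 1) + T + π) * r ^ (1 - β) := by
        rw [add_mul (1 + r), add_mul (1 / (β - 1) + T)]
        exact add_le_add (one_add_mul_integral_reducedIntegrand_le hβ hr hl hT)
          (sqrt_mul_integral_reducedIntegrand_le (one_half_lt_one.trans hβ).le hr hl hT)

lemma rpow_neg_le_mul_reducedIntegrand (hr : 0 < r) (hu : 0 ≤ u) (hur : u ≤ r)
    (hlu : l * u ^ 2 ≤ r) :
    r ^ (-β) ≤ 2 ^ |β| * exp 1 * reducedIntegrand β r l u := by
  have hexponent : l * (u ^ 2 / (u + r)) ≤ 1 := by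
    rw [← mul_div_assoc, div_le_one (by linarith)]
    linarith
  have hrpow : r ^ (-β) ≤ 2 ^ |β| * (u + r) ^ (-β) := by
    simpa only [abs_neg] using
      rpow_le_rpow_abs_mul_rpow (K := 2) (-β) hr (by linarith) (by linarith) (by linarith)
  calc r ^ (-β) ≤ 2 ^ |β| * (u + r) ^ (-β) := hrpow
    _ ≤ 2 ^ |β| * (u + r) ^ (-β) * exp (1 - l * (u ^ 2 / (u + r))) :=
        le_mul_of_one_le_right (by positivity) (one_le_exp (by linarith))
    _ = 2 ^ |β| * exp 1 * reducedIntegrand β r l u := by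
        rw [reducedIntegrand, sub_eq_add_neg, exp_add]
        ring

lemma mul_rpow_neg_le_mul_integral_reducedIntegrand {δ : ℝ} (hr : 0 < r) (hl : 0 ≤ l)
    (hδ : 0 ≤ δ) (hδT : δ ≤ T) (hδr : δ ≤ r) (hlδ : l * δ ^ 2 ≤ r) :
    δ * r ^ (-β) ≤ 2 ^ |β| * exp 1 * ∫ u in (0 : ℝ)..T, reducedIntegrand β r l u := by
  calc δ * r ^ (-β) = ∫ _ in (0 : ℝ)..δ, r ^ (-β) := by simp
    _ ≤ ∫ u in (0 : ℝ)..δ, 2 ^ |β| * exp 1 * reducedIntegrand β r l u := by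
        refine intervalIntegral.integral_mono_on hδ intervalIntegrable_const
          ((intervalIntegrable_reducedIntegrand hr hδ).const_mul _) fun u hu ↦ ?_
        have hlu : l * u ^ 2 ≤ l * δ ^ 2 := by
          gcongr
          exacts [hu.1, hu.2]
        exact rpow_neg_le_mul_reducedIntegrand hr hu.1 (hu.2.trans hδr) (hlu.trans hlδ)
    _ = 2 ^ |β| * exp 1 * ∫ u in (0 : ℝ)..δ, reducedIntegrand β r l u :=
        intervalIntegral.integral_const_mul _ _
    _ ≤ 2 ^ |β| * exp 1 * ∫ u in (0 : ℝ)..T, reducedIntegrand β r l u := by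
        gcongr
        refine intervalIntegral.integral_mono_interval le_rfl hδ hδT
          ((ae_restrict_iff' measurableSet_Ioc).2 (.of_forall fun u hu ↦ ?_))
          (intervalIntegrable_reducedIntegrand hr (hδ.trans hδT))
        exact reducedIntegrand_nonneg (by linarith [hu.1])

lemma le_mul_integral_reducedIntegrand (hr : 0 < r) (hl : 0 ≤ l) :
    r ^ (1 - β) / √((1 + r) ^ 2 + l * r) ≤
      2 * (2 ^ |β| * exp 1) * ∫ u in (0 : ℝ)..1 / 2, reducedIntegrand β r l u := by
  set D := √((1 + r) ^ 2 + l * r)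
  have hDsq : D ^ 2 = (1 + r) ^ 2 + l * r := sq_sqrt (by positivity)
  have hDr : 1 + r ≤ D := le_sqrt_of_sq_le (by linarith [mul_nonneg hl hr.le])
  have hDpos : 0 < D := by positivity
  have hbound := mul_rpow_neg_le_mul_integral_reducedIntegrand (β := β) (T := 1 / 2)
    (δ := r / (2 * D)) hr hl (by positivity)
    (by rw [div_le_iff₀ (by positivity)]; linarith)
    (by rw [div_le_iff₀ (by positivity)]; nlinarith)
    (by
      rw [div_pow, ← mul_div_assoc, div_le_iff₀ (by positivity), mul_pow, hDsq]
      nlinarith [mul_nonneg hl (sq_nonneg r), mul_pos hr (sq_pos_of_pos (by linarith : 0 < 1 + r))])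
  calc r ^ (1 - β) / D = 2 * (r / (2 * D) * r ^ (-β)) := by
        rw [sub_eq_neg_add, rpow_add_one hr.ne']
        field_simp
    _ ≤ 2 * (2 ^ |β| * exp 1) * ∫ u in (0 : ℝ)..1 / 2, reducedIntegrand β r l u := by
        rw [mul_assoc]
        gcongr

end ReducedIntegrand

section WeightedIntegrand

variable {α β r l u : ℝ}

lemma intervalIntegrable_weighted_reducedIntegrand (hr : 0 < r) :
    IntervalIntegrable (fun u ↦ (1 - u) ^ (-α) * reducedIntegrand β r (l / (1 - u)) u)
      volume 0 (1 / 2) := by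
  have hne : ∀ u ∈ Set.Icc (0 : ℝ) (1 / 2), 1 - u ≠ 0 := fun u hu ↦ by linarith [hu.2]
  refine ContinuousOn.intervalIntegrable_of_Icc (by norm_num) (ContinuousOn.mul ?_ ?_)
  · exact ContinuousOn.rpow_const (by fun_prop) fun u hu ↦ Or.inl (hne u hu)
  · exact continuousOn_reducedIntegrand_comp hr
      (ContinuousOn.div continuousOn_const (by fun_prop) hne)

lemma weighted_reducedIntegrand_le (hr : 0 ≤ r) (hl : 0 ≤ l) (hu : u ∈ Set.Icc 0 (1 / 2)) :
    (1 - u) ^ (-α) * reducedIntegrand β r (l / (1 - u)) u ≤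
      2 ^ |α| * reducedIntegrand β r l u := by
  obtain ⟨hu0, hu1⟩ := hu
  have hweight : (1 - u) ^ (-α) ≤ 2 ^ |α| := by
    simpa only [abs_neg, one_rpow, mul_one] using
      rpow_le_rpow_abs_mul_rpow (x := 1 - u) (y := 1) (K := 2) (-α)
        (by linarith) one_pos (by linarith) (by linarith)
  have hl' : l ≤ l / (1 - u) := le_div_self hl (by linarith) (by linarith)
  gcongr
  · exact reducedIntegrand_nonneg (by linarith)
  · exact reducedIntegrand_antitone (by linarith) hl'

lemma reducedIntegrand_two_mul_le (hr : 0 ≤ r) (hl : 0 ≤ l) (hu : u ∈ Set.Icc 0 (1 / 2)) :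
    reducedIntegrand β r (2 * l) u ≤
      2 ^ |α| * ((1 - u) ^ (-α) * reducedIntegrand β r (l / (1 - u)) u) := by
  obtain ⟨hu0, hu1⟩ := hu
  have hweight : 1 ≤ 2 ^ |α| * (1 - u) ^ (-α) := by
    simpa only [abs_neg, one_rpow] using
      rpow_le_rpow_abs_mul_rpow (x := 1) (y := 1 - u) (K := 2) (-α)
        one_pos (by linarith) (by linarith) (by linarith)
  have hl' : l / (1 - u) ≤ 2 * l := by
    rw [div_le_iff₀ (by linarith)]
    nlinarith
  calc reducedIntegrand β r (2 * l) u ≤ reducedIntegrand β r (l / (1 - u)) u :=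
        reducedIntegrand_antitone (by linarith) hl'
    _ ≤ 2 ^ |α| * (1 - u) ^ (-α) * reducedIntegrand β r (l / (1 - u)) u :=
        le_mul_of_one_le_left (reducedIntegrand_nonneg (by linarith)) hweight
    _ = _ := mul_assoc _ _ _

lemma integral_weighted_reducedIntegrand_le (hβ : 1 < β) (hr : 0 < r) (hl : 0 ≤ l) :
    ∫ u in (0 : ℝ)..1 / 2, (1 - u) ^ (-α) * reducedIntegrand β r (l / (1 - u)) u ≤
      2 ^ |α| * (1 / (β - 1) + 1 / 2 + π) * (r ^ (1 - β) / √((1 + r) ^ 2 + l * r)) := by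
  calc ∫ u in (0 : ℝ)..1 / 2, (1 - u) ^ (-α) * reducedIntegrand β r (l / (1 - u)) u
      ≤ ∫ u in (0 : ℝ)..1 / 2, 2 ^ |α| * reducedIntegrand β r l u :=
        intervalIntegral.integral_mono_on (by norm_num)
          (intervalIntegrable_weighted_reducedIntegrand hr)
          ((intervalIntegrable_reducedIntegrand hr (by norm_num)).const_mul _)
          fun u hu ↦ weighted_reducedIntegrand_le hr.le hl hu
    _ ≤ 2 ^ |α| * (1 / (β - 1) + 1 / 2 + π) * (r ^ (1 - β) / √((1 + r) ^ 2 + l * r)) := by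
        rw [intervalIntegral.integral_const_mul, mul_assoc]
        gcongr
        exact integral_reducedIntegrand_le hβ hr hl (by norm_num)

lemma le_mul_integral_weighted_reducedIntegrand (hr : 0 < r) (hl : 0 ≤ l) :
    r ^ (1 - β) / √((1 + r) ^ 2 + l * r) ≤ 4 * 2 ^ |β| * exp 1 * 2 ^ |α| *
      ∫ u in (0 : ℝ)..1 / 2, (1 - u) ^ (-α) * reducedIntegrand β r (l / (1 - u)) u := by
  have hsqrt : √((1 + r) ^ 2 + 2 * l * r) ≤ 2 * √((1 + r) ^ 2 + l * r) := by
    refine sqrt_le_iff.2 ⟨by positivity, ?_⟩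
    rw [mul_pow, sq_sqrt (by positivity)]
    nlinarith [mul_nonneg hl hr.le]
  calc r ^ (1 - β) / √((1 + r) ^ 2 + l * r)
      = 2 * (r ^ (1 - β) / (2 * √((1 + r) ^ 2 + l * r))) := by field_simp
    _ ≤ 2 * (r ^ (1 - β) / √((1 + r) ^ 2 + 2 * l * r)) := by gcongr
    _ ≤ 2 * (2 * (2 ^ |β| * exp 1) *
          ∫ u in (0 : ℝ)..1 / 2, reducedIntegrand β r (2 * l) u) := by
        gcongr
        exact le_mul_integral_reducedIntegrand hr (by positivity)
    _ ≤ 2 * (2 * (2 ^ |β| * exp 1) * ∫ u in (0 : ℝ)..1 / 2,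
          2 ^ |α| * ((1 - u) ^ (-α) * reducedIntegrand β r (l / (1 - u)) u)) := by
        gcongr
        exact intervalIntegral.integral_mono_on (by norm_num)
          (intervalIntegrable_reducedIntegrand hr (by norm_num))
          ((intervalIntegrable_weighted_reducedIntegrand hr).const_mul _)
          fun u hu ↦ reducedIntegrand_two_mul_le hr.le hl hu
    _ = _ := by
        rw [intervalIntegral.integral_const_mul]
        ring

end WeightedIntegrand

lemma setIntegral_eq_integral_weighted_reducedIntegrand (α β a b t : ℝ) :
    (∫ u in Set.Ioo (0 : ℝ) (1 / 2), (1 - u) ^ (-α) * (u + b / a) ^ (-β) *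
        exp (-((a + b) ^ 2 * u ^ 2) / ((1 - u) * t * (u + b / a)))) =
      ∫ u in (0 : ℝ)..1 / 2,
        (1 - u) ^ (-α) * reducedIntegrand β (b / a) ((a + b) ^ 2 / t / (1 - u)) u := by
  rw [intervalIntegral.integral_of_le (by norm_num), integral_Ioc_eq_integral_Ioo]
  congr 1 with u
  have hexponent : -((a + b) ^ 2 * u ^ 2) / ((1 - u) * t * (u + b / a)) =
      -((a + b) ^ 2 / t / (1 - u) * (u ^ 2 / (u + b / a))) := by
    rw [div_div, div_mul_div_comm, mul_comm t, neg_div]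
  rw [reducedIntegrand, hexponent, mul_assoc]

lemma rpow_mul_div_mul_sqrt_eq (β : ℝ) {a b t : ℝ} (ha : 0 < a) (hb : 0 < b) (ht : 0 < t) :
    (a / b) ^ (β - 1) * (a / (a + b)) * √(t / (a * b + t)) =
      (b / a) ^ (1 - β) / √((1 + b / a) ^ 2 + (a + b) ^ 2 / t * (b / a)) := by
  have hrpow : (a / b) ^ (β - 1) = (b / a) ^ (1 - β) := by
    rw [← neg_sub β 1, rpow_neg_eq_inv_rpow, inv_div]
  have hradicand : (1 + b / a) ^ 2 + (a + b) ^ 2 / t * (b / a) =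
      ((a / (a + b)) ^ 2 * (t / (a * b + t)))⁻¹ := by
    field_simp
    ring
  rw [hrpow, hradicand, sqrt_inv, div_inv_eq_mul, sqrt_mul (by positivity),
    sqrt_sq (by positivity), mul_assoc]

theorem stmt6_general (α β : ℝ) (hβ : 1 < β) :
    ∃ c C : ℝ, 0 < c ∧ 0 < C ∧ ∀ a b t : ℝ, 0 < a → 0 < b → 0 < t →
      c * (a / b) ^ (β - 1) * (a / (a + b)) * Real.sqrt (t / (a * b + t)) ≤
        (∫ u in Set.Ioo (0 : ℝ) (1 / 2),
          (1 - u) ^ (-α) * (u + b / a) ^ (-β) *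
            Real.exp (-((a + b) ^ 2 * u ^ 2) / ((1 - u) * t * (u + b / a)))) ∧
      (∫ u in Set.Ioo (0 : ℝ) (1 / 2),
          (1 - u) ^ (-α) * (u + b / a) ^ (-β) *
            Real.exp (-((a + b) ^ 2 * u ^ 2) / ((1 - u) * t * (u + b / a)))) ≤
        C * (a / b) ^ (β - 1) * (a / (a + b)) * Real.sqrt (t / (a * b + t)) := by
  have : 0 < β - 1 := sub_pos.2 hβ
  refine ⟨(4 * 2 ^ |β| * exp 1 * 2 ^ |α|)⁻¹, 2 ^ |α| * (1 / (β - 1) + 1 / 2 + π),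
    by positivity, by positivity, fun a b t ha hb ht ↦ ?_⟩
  have hr : 0 < b / a := by positivity
  have hl : 0 ≤ (a + b) ^ 2 / t := by positivity
  have hassoc (K : ℝ) : K * (a / b) ^ (β - 1) * (a / (a + b)) * √(t / (a * b + t)) =
      K * ((b / a) ^ (1 - β) / √((1 + b / a) ^ 2 + (a + b) ^ 2 / t * (b / a))) := by
    rw [← rpow_mul_div_mul_sqrt_eq β ha hb ht]
    ring
  rw [setIntegral_eq_integral_weighted_reducedIntegrand, hassoc, hassoc,
    inv_mul_le_iff₀ (by positivity)]
  exact ⟨le_mul_integral_weighted_reducedIntegrand hr hl,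
    integral_weighted_reducedIntegrand_le hβ hr hl⟩

/-- For fixed `α, β > 3/2` there are constants `c, C > 0` depending only on `α, β` such that
for all `a, b, t > 0` the integral
`J⁽¹⁾ = ∫₀^{1/2} (1−u)^(−α) (u+b/a)^(−β) exp(−(a+b)²u²/((1−u)t(u+b/a))) du` satisfies
`c (a/b)^{β−1} (a/(a+b)) √(t/(ab+t)) ≤ J⁽¹⁾ ≤ C (a/b)^{β−1} (a/(a+b)) √(t/(ab+t))`. -/
theorem stmt6 (α β : ℝ) (hα : 3 / 2 < α) (hβ : 3 / 2 < β) :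
    ∃ c C : ℝ, 0 < c ∧ 0 < C ∧ ∀ a b t : ℝ, 0 < a → 0 < b → 0 < t →
      c * (a / b) ^ (β - 1) * (a / (a + b)) * Real.sqrt (t / (a * b + t)) ≤
        (∫ u in Set.Ioo (0 : ℝ) (1 / 2),
          (1 - u) ^ (-α) * (u + b / a) ^ (-β) *
            Real.exp (-((a + b) ^ 2 * u ^ 2) / ((1 - u) * t * (u + b / a)))) ∧
      (∫ u in Set.Ioo (0 : ℝ) (1 / 2),
          (1 - u) ^ (-α) * (u + b / a) ^ (-β) *
            Real.exp (-((a + b) ^ 2 * u ^ 2) / ((1 - u) * t * (u + b / a)))) ≤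
        C * (a / b) ^ (β - 1) * (a / (a + b)) * Real.sqrt (t / (a * b + t)) :=
  stmt6_general α β (by linarith)
end

section
/- For every c₁ > 0 there exists a constant c₀ > 0 such that for all u, v > 0 with u/v > c₁: | (1 − e^{−u})/(1 − e^{−v}) − 1 | ≤ c₀ · |u − v| / v. -/
/-!
A concave function `f` with `0 ≤ f 0` satisfies `t f(x) ≤ f(t x)` for `0 ≤ t ≤ 1`. If `f` is
moreover monotone, then for `0 ≤ u` and `0 < v` the value `f u` lies between `f v` and
`(u / v) f v`, so the relative increment of `f` is at most that of its argument. Apply this to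
`f x = 1 - exp (-x)`.
-/

open Set

lemma smul_le_map_smul_of_concaveOn {𝕜 E β : Type*} [Ring 𝕜] [PartialOrder 𝕜] [IsOrderedRing 𝕜]
    [AddCommMonoid E] [Module 𝕜 E] [AddCommMonoid β] [PartialOrder β] [IsOrderedAddMonoid β]
    [Module 𝕜 β] [PosSMulMono 𝕜 β] {s : Set E} {f : E → β} (hf : ConcaveOn 𝕜 s f)
    (h0 : 0 ∈ s) (hf0 : 0 ≤ f 0) {x : E} (hx : x ∈ s) {t : 𝕜} (ht0 : 0 ≤ t) (ht1 : t ≤ 1) :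
    t • f x ≤ f (t • x) :=
  calc t • f x ≤ t • f x + (1 - t) • f 0 :=
        le_add_of_nonneg_right (smul_nonneg (sub_nonneg.2 ht1) hf0)
    _ ≤ f (t • x + (1 - t) • 0) := hf.2 hx h0 ht0 (sub_nonneg.2 ht1) (add_sub_cancel t 1)
    _ = f (t • x) := by rw [smul_zero, add_zero]

section Field

variable {𝕜 : Type*} [Field 𝕜] [LinearOrder 𝕜] [IsStrictOrderedRing 𝕜] {s : Set 𝕜} {f : 𝕜 → 𝕜}

lemma div_mul_map_le_map_of_concaveOn (hf : ConcaveOn 𝕜 s f) (h0 : 0 ∈ s) (hf0 : 0 ≤ f 0) {x y : 𝕜}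
    (hy : y ∈ s) (hx0 : 0 ≤ x) (hxy : x ≤ y) : x / y * f y ≤ f x := by
  have hy0 : 0 ≤ y := hx0.trans hxy
  have hcancel : x / y * y = x := div_mul_cancel_of_imp fun h => le_antisymm (h ▸ hxy) hx0
  simpa only [smul_eq_mul, hcancel] using
    smul_le_map_smul_of_concaveOn hf h0 hf0 hy (div_nonneg hx0 hy0) (div_le_one_of_le₀ hxy hy0)

lemma abs_map_sub_map_le_of_concaveOn_of_monotoneOn (hf : ConcaveOn 𝕜 s f) (hmono : MonotoneOn f s)
    (h0 : 0 ∈ s) (hf0 : 0 ≤ f 0) {u v : 𝕜} (hus : u ∈ s) (hvs : v ∈ s) (hu : 0 ≤ u) (hv : 0 < v) :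
    |f u - f v| ≤ |u - v| / v * f v := by
  rcases le_total u v with huv | hvu
  · have hsecant : u / v * f v ≤ f u := div_mul_map_le_map_of_concaveOn hf h0 hf0 hvs hu huv
    rw [abs_of_nonpos (sub_nonpos.2 (hmono hus hvs huv)), abs_of_nonpos (sub_nonpos.2 huv),
      neg_sub, neg_sub, sub_div, div_self hv.ne', sub_mul, one_mul]
    exact sub_le_sub_left hsecant _
  · have hsecant : f u ≤ u / v * f v := by
      rw [← inv_div v u, ← div_eq_inv_mul, le_div_iff₀' (div_pos hv (hv.trans_le hvu))]
      exact div_mul_map_le_map_of_concaveOn hf h0 hf0 hus hv.le hvu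
    rw [abs_of_nonneg (sub_nonneg.2 (hmono hvs hus hvu)), abs_of_nonneg (sub_nonneg.2 hvu),
      sub_div, div_self hv.ne', sub_mul, one_mul]
    exact sub_le_sub_right hsecant _

end Field

lemma concaveOn_one_sub_exp_neg : ConcaveOn ℝ univ fun x : ℝ => 1 - Real.exp (-x) :=
  (concaveOn_const 1 convex_univ).sub (convexOn_exp.comp_linearMap (-LinearMap.id))

lemma monotone_one_sub_exp_neg : Monotone fun x : ℝ => 1 - Real.exp (-x) := fun _ _ hxy =>
  sub_le_sub_left (Real.exp_le_exp.2 (neg_le_neg hxy)) 1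

theorem stmt9_general {u v : ℝ} (hu : 0 ≤ u) (hv : 0 < v) :
    |(1 - Real.exp (-u)) / (1 - Real.exp (-v)) - 1| ≤ |u - v| / v := by
  have hpos : 0 < 1 - Real.exp (-v) := sub_pos.2 (Real.exp_lt_one_iff.2 (neg_lt_zero.2 hv))
  rw [div_sub_one hpos.ne', abs_div, abs_of_pos hpos, div_le_iff₀ hpos]
  exact abs_map_sub_map_le_of_concaveOn_of_monotoneOn concaveOn_one_sub_exp_neg
    (monotone_one_sub_exp_neg.monotoneOn univ) (mem_univ 0) (by simp) (mem_univ u) (mem_univ v)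
    hu hv

/-- For every `c₁ > 0` there is `c₀ > 0` such that for all `u, v > 0` with `u/v > c₁`:
`|(1 − e^{−u})/(1 − e^{−v}) − 1| ≤ c₀ |u − v| / v`. -/
theorem stmt9 (c₁ : ℝ) (hc₁ : 0 < c₁) :
    ∃ c₀ : ℝ, 0 < c₀ ∧ ∀ u v : ℝ, 0 < u → 0 < v → c₁ < u / v →
      |(1 - Real.exp (-u)) / (1 - Real.exp (-v)) - 1| ≤ c₀ * |u - v| / v :=
  ⟨1, one_pos, fun u v hu hv _ => by simpa only [one_mul] using stmt9_general hu.le hv⟩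
end

section
/- Let n ≥ 1 and let x, y be nonzero points of the closed unit ball of ℝⁿ (Euclidean norm). Then | x/|x| − y/|y| | ≤ δ(x) + |x−y| + δ(y) ≤ 2√6 · √( δ((x+y)/2) ), where δ(z) = 1 − |z|. -/
/-! Radial projection moves `x` and `y` by `δ(x)` and `δ(y)`, so the first inequality is the
triangle inequality along the path `x/|x|`, `x`, `y`, `y/|y|`. For the second, put
`t = δ((x+y)/2) ≤ 1`. Concavity of `δ` gives `δ(x) + δ(y) ≤ 2t`, hence `(δ(x) + δ(y))² ≤ 4t`, and
the parallelogram law gives `|x−y|² ≤ 4(1 − (1 − t)²) ≤ 8t`. By Cauchy–Schwarz the square of the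
whole sum is then at most `2(4t + 8t) = (2√6)² t`. -/

section NormedSpace

variable {E : Type*} [NormedAddCommGroup E] [NormedSpace ℝ E]

theorem norm_inv_norm_smul_sub_self {x : E} (hx : x ≠ 0) : ‖‖x‖⁻¹ • x - x‖ = |1 - ‖x‖| := by
  have hx' : ‖x‖ ≠ 0 := norm_ne_zero_iff.mpr hx
  calc ‖‖x‖⁻¹ • x - x‖ = ‖(‖x‖⁻¹ - 1) • x‖ := by rw [sub_smul, one_smul]
    _ = |‖x‖⁻¹ - 1| * |‖x‖| := by rw [norm_smul, Real.norm_eq_abs, abs_norm]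
    _ = |1 - ‖x‖| := by rw [← abs_mul, sub_mul, inv_mul_cancel₀ hx', one_mul]

theorem norm_inv_norm_smul_sub_inv_norm_smul_le {x y : E} (hx : x ≠ 0) (hy : y ≠ 0) :
    ‖‖x‖⁻¹ • x - ‖y‖⁻¹ • y‖ ≤ |1 - ‖x‖| + ‖x - y‖ + |1 - ‖y‖| := by
  calc ‖‖x‖⁻¹ • x - ‖y‖⁻¹ • y‖
      = ‖(‖x‖⁻¹ • x - x) + (x - y) + (y - ‖y‖⁻¹ • y)‖ := by congr 1; abel
    _ ≤ ‖‖x‖⁻¹ • x - x‖ + ‖x - y‖ + ‖y - ‖y‖⁻¹ • y‖ := norm_add₃_le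
    _ = |1 - ‖x‖| + ‖x - y‖ + |1 - ‖y‖| := by
      rw [norm_sub_rev y, norm_inv_norm_smul_sub_self hx, norm_inv_norm_smul_sub_self hy]

end NormedSpace

section SeminormedSpace

variable {E : Type*} [SeminormedAddCommGroup E] [NormedSpace ℝ E]

theorem norm_half_smul_add (x y : E) : ‖(1 / 2 : ℝ) • (x + y)‖ = ‖x + y‖ / 2 := by
  rw [norm_smul, Real.norm_of_nonneg one_half_pos.le, one_div_mul_eq_div]

theorem norm_half_smul_add_le (x y : E) : ‖(1 / 2 : ℝ) • (x + y)‖ ≤ (‖x‖ + ‖y‖) / 2 := by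
  rw [norm_half_smul_add]
  gcongr
  exact norm_add_le x y

end SeminormedSpace

section InnerProductSpace

variable {E : Type*} [SeminormedAddCommGroup E] [InnerProductSpace ℝ E]

theorem norm_sub_sq_eq_norm_half_smul_add (x y : E) :
    ‖x - y‖ ^ 2 = 2 * (‖x‖ ^ 2 + ‖y‖ ^ 2) - 4 * ‖(1 / 2 : ℝ) • (x + y)‖ ^ 2 := by
  rw [norm_half_smul_add]
  linear_combination parallelogram_law_with_norm ℝ x y

theorem norm_sub_sq_le_of_norm_le {x y : E} {r : ℝ} (hx : ‖x‖ ≤ r) (hy : ‖y‖ ≤ r) :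
    ‖x - y‖ ^ 2 ≤ 4 * (r ^ 2 - ‖(1 / 2 : ℝ) • (x + y)‖ ^ 2) := by
  have hx_sq : ‖x‖ ^ 2 ≤ r ^ 2 := by gcongr
  have hy_sq : ‖y‖ ^ 2 ≤ r ^ 2 := by gcongr
  linarith [norm_sub_sq_eq_norm_half_smul_add x y]

theorem one_sub_norm_add_norm_sub_add_one_sub_norm_le {x y : E} (hx : ‖x‖ ≤ 1) (hy : ‖y‖ ≤ 1) :
    (1 - ‖x‖) + ‖x - y‖ + (1 - ‖y‖) ≤
      2 * Real.sqrt 6 * Real.sqrt (1 - ‖(1 / 2 : ℝ) • (x + y)‖) := by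
  have hmid := norm_half_smul_add_le x y
  have hsub := norm_sub_sq_le_of_norm_le hx hy
  have hm_nonneg := norm_nonneg ((1 / 2 : ℝ) • (x + y))
  set m := ‖(1 / 2 : ℝ) • (x + y)‖
  have hm_le : m ≤ 1 := by linarith
  have hδ : ((1 - ‖x‖) + (1 - ‖y‖)) ^ 2 ≤ 4 * (1 - m) :=
    calc ((1 - ‖x‖) + (1 - ‖y‖)) ^ 2 ≤ (2 * (1 - m)) ^ 2 :=
          pow_le_pow_left₀ (by linarith) (by linarith) 2
      _ ≤ 4 * (1 - m) := by nlinarith [mul_nonneg hm_nonneg (sub_nonneg.mpr hm_le)]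
  have hdist : ‖x - y‖ ^ 2 ≤ 8 * (1 - m) := by linarith [sq_nonneg (1 - m)]
  have hsq : ((1 - ‖x‖) + ‖x - y‖ + (1 - ‖y‖)) ^ 2 ≤ 2 ^ 2 * 6 * (1 - m) :=
    calc ((1 - ‖x‖) + ‖x - y‖ + (1 - ‖y‖)) ^ 2
        = (((1 - ‖x‖) + (1 - ‖y‖)) + ‖x - y‖) ^ 2 := by ring
      _ ≤ 2 * (((1 - ‖x‖) + (1 - ‖y‖)) ^ 2 + ‖x - y‖ ^ 2) := add_sq_le
      _ ≤ 2 ^ 2 * 6 * (1 - m) := by linarith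
  calc (1 - ‖x‖) + ‖x - y‖ + (1 - ‖y‖)
      ≤ Real.sqrt (2 ^ 2 * 6 * (1 - m)) := Real.le_sqrt_of_sq_le hsq
    _ = 2 * Real.sqrt 6 * Real.sqrt (1 - m) := by
      rw [Real.sqrt_mul (by positivity), Real.sqrt_mul (by positivity), Real.sqrt_sq zero_le_two]

end InnerProductSpace

theorem stmt11_general {E : Type*} [NormedAddCommGroup E] [InnerProductSpace ℝ E] {x y : E}
    (hx0 : x ≠ 0) (hy0 : y ≠ 0) (hx : ‖x‖ ≤ 1) (hy : ‖y‖ ≤ 1) :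
    ‖‖x‖⁻¹ • x - ‖y‖⁻¹ • y‖ ≤ (1 - ‖x‖) + ‖x - y‖ + (1 - ‖y‖) ∧
    (1 - ‖x‖) + ‖x - y‖ + (1 - ‖y‖) ≤
      2 * Real.sqrt 6 * Real.sqrt (1 - ‖(1 / 2 : ℝ) • (x + y)‖) := by
  refine ⟨?_, one_sub_norm_add_norm_sub_add_one_sub_norm_le hx hy⟩
  simpa only [abs_of_nonneg (sub_nonneg.mpr hx), abs_of_nonneg (sub_nonneg.mpr hy)] using
    norm_inv_norm_smul_sub_inv_norm_smul_le hx0 hy0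

/-- For nonzero `x, y` in the closed unit ball of ℝⁿ, with `δ(z) = 1 − |z|`:
`|x/|x| − y/|y|| ≤ δ(x) + |x−y| + δ(y) ≤ 2√6 √(δ((x+y)/2))`. -/
theorem stmt11 (n : ℕ) (hn : 1 ≤ n) (x y : EuclideanSpace ℝ (Fin n))
    (hx0 : x ≠ 0) (hy0 : y ≠ 0) (hx : ‖x‖ ≤ 1) (hy : ‖y‖ ≤ 1) :
    ‖‖x‖⁻¹ • x - ‖y‖⁻¹ • y‖ ≤ (1 - ‖x‖) + ‖x - y‖ + (1 - ‖y‖) ∧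
    (1 - ‖x‖) + ‖x - y‖ + (1 - ‖y‖) ≤
      2 * Real.sqrt 6 * Real.sqrt (1 - ‖(1 / 2 : ℝ) • (x + y)‖) :=
  stmt11_general hx0 hy0 hx hy
end

section
/- Let n ≥ 1 and let x, y be nonzero points of the open unit ball B = B(0,1) ⊂ ℝⁿ (Euclidean norm). Then 1 − √( 1 − (1/4)| x/|x| − y/|y| |² ) ≤ (1/4)| x/|x| − y/|y| |² ≤ 6 · δ((x+y)/2), where δ(z) = 1 − |z|. -/
/-!
With `u = x / ‖x‖`, `v = y / ‖y‖` and `s = ‖u - v‖² / 4 ∈ [0, 1]`, the left inequality says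
`1 - s ≤ √(1 - s)`. By the parallelogram law `‖u + v‖ ≤ 2 √(1 - s) ≤ 2 - s`, which is the right
inequality, with constant `2`, for unit vectors. If `‖y‖ ≤ ‖x‖`, the splitting
`x + y = (‖x‖ - ‖y‖) u + ‖y‖ (u + v)` reduces the general case to this one.
-/

section Seminormed

variable {E : Type*} [SeminormedAddCommGroup E]

lemma quarter_norm_sub_sq_le_one {u v : E} (hu : ‖u‖ ≤ 1) (hv : ‖v‖ ≤ 1) :
    1 / 4 * ‖u - v‖ ^ 2 ≤ 1 := by
  have h : ‖u - v‖ ≤ 2 := by linarith [norm_sub_le u v]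
  nlinarith [norm_nonneg (u - v)]

variable [InnerProductSpace ℝ E]

lemma norm_add_le_two_sub_quarter_norm_sub_sq {u v : E} (hu : ‖u‖ ≤ 1) (hv : ‖v‖ ≤ 1) :
    ‖u + v‖ ≤ 2 - 1 / 4 * ‖u - v‖ ^ 2 := by
  have hs : 1 / 4 * ‖u - v‖ ^ 2 ≤ 1 := quarter_norm_sub_sq_le_one hu hv
  refine le_of_sq_le_sq ?_ (by linarith)
  calc ‖u + v‖ ^ 2 = 2 * (‖u‖ ^ 2 + ‖v‖ ^ 2) - ‖u - v‖ ^ 2 := by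
        linarith [parallelogram_law_with_norm ℝ u v]
    _ ≤ 2 * (1 ^ 2 + 1 ^ 2) - ‖u - v‖ ^ 2 := by gcongr
    _ ≤ (2 - 1 / 4 * ‖u - v‖ ^ 2) ^ 2 := by linarith [sq_nonneg (1 / 4 * ‖u - v‖ ^ 2)]

lemma norm_smul_add_smul_le_two_sub_quarter_norm_sub_sq {u v : E} {a b : ℝ}
    (hu : ‖u‖ ≤ 1) (hv : ‖v‖ ≤ 1) (ha₀ : 0 ≤ a) (ha₁ : a ≤ 1) (hb₀ : 0 ≤ b) (hb₁ : b ≤ 1) :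
    ‖a • u + b • v‖ ≤ 2 - 1 / 4 * ‖u - v‖ ^ 2 := by
  wlog hba : b ≤ a generalizing u v a b
  · rw [add_comm, norm_sub_rev]
    exact this hv hu hb₀ hb₁ ha₀ ha₁ (le_of_not_ge hba)
  have hs : 0 ≤ 1 - 1 / 4 * ‖u - v‖ ^ 2 := sub_nonneg.mpr (quarter_norm_sub_sq_le_one hu hv)
  have ha : 0 ≤ a - b := sub_nonneg.mpr hba
  calc ‖a • u + b • v‖ = ‖(a - b) • u + b • (u + v)‖ := by congr 1; module
    _ ≤ (a - b) * ‖u‖ + b * ‖u + v‖ := by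
        simpa only [norm_smul_of_nonneg ha, norm_smul_of_nonneg hb₀] using
          norm_add_le ((a - b) • u) (b • (u + v))
    _ ≤ (a - b) * 1 + b * (2 - 1 / 4 * ‖u - v‖ ^ 2) := by
        gcongr
        exact norm_add_le_two_sub_quarter_norm_sub_sq hu hv
    _ = a + b * (1 - 1 / 4 * ‖u - v‖ ^ 2) := by ring
    _ ≤ 1 + 1 * (1 - 1 / 4 * ‖u - v‖ ^ 2) := by gcongr
    _ = 2 - 1 / 4 * ‖u - v‖ ^ 2 := by ring

end Seminormed

/-- The constant `2` is optimal: for unit vectors `x`, `y` at angle `2 θ`, the last inequality reads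
`sin² θ ≤ 2 (1 - cos θ)`, whose two sides are both asymptotic to `θ²` as `θ → 0`. -/
theorem stmt12_general {E : Type*} [NormedAddCommGroup E] [InnerProductSpace ℝ E] {x y : E}
    (hx₀ : x ≠ 0) (hy₀ : y ≠ 0) (hx : ‖x‖ ≤ 1) (hy : ‖y‖ ≤ 1) :
    1 - √(1 - 1 / 4 * ‖‖x‖⁻¹ • x - ‖y‖⁻¹ • y‖ ^ 2) ≤ 1 / 4 * ‖‖x‖⁻¹ • x - ‖y‖⁻¹ • y‖ ^ 2 ∧
      1 / 4 * ‖‖x‖⁻¹ • x - ‖y‖⁻¹ • y‖ ^ 2 ≤ 2 * (1 - ‖(1 / 2 : ℝ) • (x + y)‖) := by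
  have hu : ‖‖x‖⁻¹ • x‖ ≤ 1 := (norm_smul_inv_norm (𝕜 := ℝ) hx₀).le
  have hv : ‖‖y‖⁻¹ • y‖ ≤ 1 := (norm_smul_inv_norm (𝕜 := ℝ) hy₀).le
  have hadd := norm_smul_add_smul_le_two_sub_quarter_norm_sub_sq hu hv
    (norm_nonneg x) hx (norm_nonneg y) hy
  rw [smul_inv_smul₀ (norm_ne_zero_iff.mpr hx₀), smul_inv_smul₀ (norm_ne_zero_iff.mpr hy₀)] at hadd
  refine ⟨sub_le_comm.mp (Real.le_sqrt_self_iff.mpr (sub_le_self 1 (by positivity))), ?_⟩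
  rw [norm_smul_of_nonneg one_half_pos.le]
  linarith

/-- For nonzero `x, y` in the open unit ball of ℝⁿ, with `δ(z) = 1 − |z|`:
`1 − √(1 − (1/4)|x/|x| − y/|y||²) ≤ (1/4)|x/|x| − y/|y||² ≤ 6 δ((x+y)/2)`. -/
theorem stmt12 (n : ℕ) (hn : 1 ≤ n) (x y : EuclideanSpace ℝ (Fin n))
    (hx0 : x ≠ 0) (hy0 : y ≠ 0) (hx : ‖x‖ < 1) (hy : ‖y‖ < 1) :
    1 - Real.sqrt (1 - (1 / 4) * ‖‖x‖⁻¹ • x - ‖y‖⁻¹ • y‖ ^ 2) ≤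
      (1 / 4) * ‖‖x‖⁻¹ • x - ‖y‖⁻¹ • y‖ ^ 2 ∧
    (1 / 4) * ‖‖x‖⁻¹ • x - ‖y‖⁻¹ • y‖ ^ 2 ≤ 6 * (1 - ‖(1 / 2 : ℝ) • (x + y)‖) := by
  obtain ⟨hsqrt, hδ⟩ := stmt12_general hx0 hy0 hx.le hy.le
  exact ⟨hsqrt, by linarith [sq_nonneg ‖‖x‖⁻¹ • x - ‖y‖⁻¹ • y‖]⟩
end

section
/- Let n ≥ 1 and let x, y be points of the open unit ball B = B(0,1) ⊂ ℝⁿ (Euclidean norm) with x ≠ 0 and δ(x) < (1/64)·δ(y), where δ(z) = 1 − |z|. Then the open ball B( (1/32)y + (31/32)x, δ(y)/64 ) is contained in the open ball B( (15/16)·x/|x|, 1/16 ). -/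
/-!
Put `u = x / ‖x‖`. The balls `B(a u, 1 - a)` all touch the unit sphere at `u`, so they shrink as
`a` increases. The hypothesis on `δ(x)` forces `(31/32)‖x‖ ≥ 15/16`, hence the ball of this family
centred at `(31/32) x` lies in the one centred at `(15/16) u`. The slack
`1 - (31/32)‖x‖ - (1/32)‖y‖ ≥ δ(y)/32` leaves room to translate the centre by `(1/32) y` and still
keep the radius `δ(y)/64`.
-/

section

variable {E : Type*} [SeminormedAddCommGroup E]

theorem ball_add_subset_ball (v c : E) (r : ℝ) :
    Metric.ball (v + c) r ⊆ Metric.ball c (r + ‖v‖) :=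
  Metric.ball_subset_ball' (by rw [dist_add_self_left])

variable [NormedSpace ℝ E]

theorem ball_smul_subset_ball_smul {u : E} (hu : ‖u‖ ≤ 1) {a b r R : ℝ} (hba : b ≤ a)
    (h : r + a ≤ b + R) : Metric.ball (a • u) r ⊆ Metric.ball (b • u) R := by
  have hdist : dist (a • u) (b • u) ≤ a - b :=
    calc
      dist (a • u) (b • u) = (a - b) * ‖u‖ := by
        rw [dist_eq_norm, ← sub_smul, norm_smul_of_nonneg (sub_nonneg.mpr hba)]
      _ ≤ a - b := mul_le_of_le_one_right (sub_nonneg.mpr hba) hu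
  exact Metric.ball_subset_ball' (by linarith)

theorem stmt13_general {x y : E} (hx : ‖x‖ ≠ 0) {s t b r R : ℝ} (ht : 0 ≤ t)
    (hb : b ≤ s * ‖x‖) (h : r + t * ‖y‖ + s * ‖x‖ ≤ b + R) :
    Metric.ball (t • y + s • x) r ⊆ Metric.ball (b • (‖x‖⁻¹ • x)) R := by
  have hunit : ‖‖x‖⁻¹ • x‖ = 1 := by
    rw [norm_smul, norm_inv, norm_norm, inv_mul_cancel₀ hx]
  have hpolar : s • x = (s * ‖x‖) • (‖x‖⁻¹ • x) := by
    rw [smul_smul, mul_inv_cancel_right₀ hx]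
  calc
    Metric.ball (t • y + s • x) r ⊆ Metric.ball (s • x) (r + t * ‖y‖) := by
      rw [← norm_smul_of_nonneg ht]
      exact ball_add_subset_ball _ _ _
    _ = Metric.ball ((s * ‖x‖) • (‖x‖⁻¹ • x)) (r + t * ‖y‖) := by rw [← hpolar]
    _ ⊆ Metric.ball (b • (‖x‖⁻¹ • x)) R := ball_smul_subset_ball_smul hunit.le hb h

end

/-- If `x, y` lie in the open unit ball of ℝⁿ, `x ≠ 0` and `δ(x) < δ(y)/64`
(with `δ(z) = 1 − |z|`), then
`B((1/32)y + (31/32)x, δ(y)/64) ⊆ B((15/16)·x/|x|, 1/16)`. -/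
theorem stmt13 (n : ℕ) (hn : 1 ≤ n) (x y : EuclideanSpace ℝ (Fin n))
    (hx0 : x ≠ 0) (hx : ‖x‖ < 1) (hy : ‖y‖ < 1)
    (hδ : 1 - ‖x‖ < (1 / 64) * (1 - ‖y‖)) :
    Metric.ball ((1 / 32 : ℝ) • y + (31 / 32 : ℝ) • x) ((1 - ‖y‖) / 64) ⊆
      Metric.ball ((15 / 16 : ℝ) • (‖x‖⁻¹ • x)) (1 / 16) :=
  stmt13_general (norm_ne_zero_iff.mpr hx0) (by norm_num) (by linarith [norm_nonneg y])
    (by linarith)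
end
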